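/- Let p > q and θ ∈ (0, π/2). If h is a positive convex solution of det(∇²h + hσ) = f·h^{p-1}(h² + |∇h|²)^{(n+1-q)/2} in C_θ with ∇_μ h = cot θ · h on ∂C_θ, where f > 0 is smooth on C_θ, then max_{C_θ} |∇²h| ≤ C, where the positive constant C depends only on n, p, q, min_{C_θ} f, min_{C_θ} h, ‖f‖_{C²(C_θ)} and ‖h‖_{C⁰(C_θ)}. -/

import Mathlib

/- Formalization of statements from "The L_p dual Minkowski problem for capillary
hypersurfaces".

We work in the ambient space `ℝ^{n+1}`.  The spherical cap `C_θ` is the part of the unit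
sphere centred at `cos θ • e` (where `e = -E_{n+1}`) lying in the closed upper half-space.
Functions on `C_θ` are represented by ambient functions `h : Euc n → ℝ`; the intrinsic
(round-metric) gradient `∇h` and Hessian `∇²h` of the restriction of `h` to `C_θ` are
expressed through ambient derivatives (for tangential arguments these expressions depend
only on the restriction of `h` to the cap).  The quantity `det(∇²h + hσ)` is encoded as the
determinant of the endomorphism of `ℝ^{n+1}` acting as `∇²h + hσ` on the tangent space of
the cap and as the identity on the normal line. -/

open Real Set
open scoped RealInnerProductSpace

noncomputable section

/-- Ambient Euclidean space `ℝ^{n+1}`. -/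
abbrev Euc (n : ℕ) : Type := EuclideanSpace ℝ (Fin (n + 1))

/-- The unit vector `e = -E_{n+1}`. -/
def eVec (n : ℕ) : Euc n := -(EuclideanSpace.single (Fin.last n) (1 : ℝ))

/-- `ν(ξ) = ξ - cos θ • e`, the unit normal (at `ξ`) of the sphere containing the cap `C_θ`. -/
def sphNormal (n : ℕ) (θ : ℝ) (ξ : Euc n) : Euc n := ξ - Real.cos θ • eVec n

/-- The spherical cap `C_θ = {ξ ∈ closure ℝ^{n+1}_+ : |ξ - cos θ • e| = 1}`. -/
def cap (n : ℕ) (θ : ℝ) : Set (Euc n) :=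
  {ξ | 0 ≤ ξ (Fin.last n) ∧ ‖sphNormal n θ ξ‖ = 1}

/-- The boundary `∂C_θ`. -/
def capBdry (n : ℕ) (θ : ℝ) : Set (Euc n) :=
  {ξ | ξ (Fin.last n) = 0 ∧ ‖sphNormal n θ ξ‖ = 1}

/-- The outward unit conormal `μ` of `∂C_θ` in `C_θ` (at boundary points). -/
def conormal (n : ℕ) (θ : ℝ) (ξ : Euc n) : Euc n :=
  Real.cot θ • ξ + Real.sin θ • eVec n

/-- Orthogonal projection of `ℝ^{n+1}` onto the tangent space of the cap at `ξ`. -/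
def tproj (n : ℕ) (θ : ℝ) (ξ : Euc n) : Euc n →L[ℝ] Euc n :=
  ContinuousLinearMap.id ℝ (Euc n) - (innerSL ℝ (sphNormal n θ ξ)).smulRight (sphNormal n θ ξ)

/-- `X` is tangent to the cap at `ξ`. -/
def IsTangent (n : ℕ) (θ : ℝ) (ξ X : Euc n) : Prop :=
  ⟪X, sphNormal n θ ξ⟫ = 0

/-- Intrinsic (round-metric) gradient `∇h` of `h` on the cap. -/
def sgrad (n : ℕ) (θ : ℝ) (h : Euc n → ℝ) (ξ : Euc n) : Euc n :=
  tproj n θ ξ (gradient h ξ)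

/-- Intrinsic (round-metric) Hessian `∇²h(X,Y)` of `h` on the cap (tangential arguments). -/
def shess (n : ℕ) (θ : ℝ) (h : Euc n → ℝ) (ξ X Y : Euc n) : ℝ :=
  ⟪(fderiv ℝ (gradient h) ξ) X, Y⟫ - ⟪gradient h ξ, sphNormal n θ ξ⟫ * ⟪X, Y⟫

/-- Endomorphism representing the intrinsic Hessian `∇²h` on tangent vectors
(and vanishing on the normal line). -/
def thessOp (n : ℕ) (θ : ℝ) (h : Euc n → ℝ) (ξ : Euc n) : Euc n →L[ℝ] Euc n :=
  ((tproj n θ ξ).comp ((fderiv ℝ (gradient h) ξ).comp (tproj n θ ξ)))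
    - ⟪gradient h ξ, sphNormal n θ ξ⟫ • tproj n θ ξ

/-- Rank-one projection onto the normal direction at `ξ`. -/
def normalPart (n : ℕ) (θ : ℝ) (ξ : Euc n) : Euc n →L[ℝ] Euc n :=
  (innerSL ℝ (sphNormal n θ ξ)).smulRight (sphNormal n θ ξ)

/-- Endomorphism acting as `∇²h + hσ` on the tangent space and as the identity on the
normal line. -/
def hessOp (n : ℕ) (θ : ℝ) (h : Euc n → ℝ) (ξ : Euc n) : Euc n →L[ℝ] Euc n :=
  thessOp n θ h ξ + h ξ • tproj n θ ξ + normalPart n θ ξ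

/-- `det(∇²h + hσ)` at `ξ`. -/
def sdet (n : ℕ) (θ : ℝ) (h : Euc n → ℝ) (ξ : Euc n) : ℝ :=
  LinearMap.det (hessOp n θ h ξ).toLinearMap

/-- `h > 0` on the cap. -/
def PosOnCap (n : ℕ) (θ : ℝ) (h : Euc n → ℝ) : Prop := ∀ ξ ∈ cap n θ, 0 < h ξ

/-- Convexity of a solution: `∇²h + hσ > 0` on the cap. -/
def IsConvexSol (n : ℕ) (θ : ℝ) (h : Euc n → ℝ) : Prop :=
  ∀ ξ ∈ cap n θ, ∀ X : Euc n, IsTangent n θ ξ X → X ≠ 0 →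
    0 < shess n θ h ξ X X + h ξ * ⟪X, X⟫

/-- The right-hand side `f·h^{p-1}·(h² + |∇h|²)^{(n+1-q)/2}`. -/
def eqRHS (n : ℕ) (θ p q : ℝ) (f h : Euc n → ℝ) (ξ : Euc n) : ℝ :=
  f ξ * h ξ ^ (p - 1) * (h ξ ^ 2 + ‖sgrad n θ h ξ‖ ^ 2) ^ (((n : ℝ) + 1 - q) / 2)

/-- `h` solves `det(∇²h + hσ) = f·h^{p-1}(h² + |∇h|²)^{(n+1-q)/2}` in `C_θ`. -/
def SolvesEq (n : ℕ) (θ p q : ℝ) (f h : Euc n → ℝ) : Prop :=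
  ∀ ξ ∈ cap n θ, sdet n θ h ξ = eqRHS n θ p q f h ξ

/-- Robin boundary condition `∇_μ h = cot θ · h` on `∂C_θ`. -/
def RobinBC (n : ℕ) (θ : ℝ) (h : Euc n → ℝ) : Prop :=
  ∀ ξ ∈ capBdry n θ, ⟪sgrad n θ h ξ, conormal n θ ξ⟫ = Real.cot θ * h ξ

/-- `l(ξ) = sin²θ + cos θ·⟨ξ, e⟩`. -/
def lFun (n : ℕ) (θ : ℝ) (ξ : Euc n) : ℝ :=
  Real.sin θ ^ 2 + Real.cos θ * ⟪ξ, eVec n⟫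

/-- `‖f‖_{C⁰(C_θ)} ≤ K`. -/
def CZeroNormLe (n : ℕ) (θ : ℝ) (f : Euc n → ℝ) (K : ℝ) : Prop :=
  ∀ ξ ∈ cap n θ, |f ξ| ≤ K

/-- `‖f‖_{C¹(C_θ)} ≤ K`. -/
def COneNormLe (n : ℕ) (θ : ℝ) (f : Euc n → ℝ) (K : ℝ) : Prop :=
  CZeroNormLe n θ f K ∧ ∀ ξ ∈ cap n θ, ‖sgrad n θ f ξ‖ ≤ K

/-- `‖f‖_{C²(C_θ)} ≤ K`. -/
def CTwoNormLe (n : ℕ) (θ : ℝ) (f : Euc n → ℝ) (K : ℝ) : Prop :=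
  COneNormLe n θ f K ∧
    ∀ ξ ∈ cap n θ, ∀ X Y : Euc n, IsTangent n θ ξ X → IsTangent n θ ξ Y →
      |shess n θ f ξ X Y| ≤ K * ‖X‖ * ‖Y‖

/-- The linearized operator `L_h(γ)` of the equation `𝒢(∇²h,h) = 𝒥₁(∇h,h)` at `h`:
the derivative at `ε = 0` of `𝒢 - 𝒥₁` along the variation `h_ε = h·e^{εγ}`
(cf. equation (5.4) of the paper, which is exactly this derivative). -/
def linOp (n : ℕ) (θ p q : ℝ) (f h γ : Euc n → ℝ) (ξ : Euc n) : ℝ :=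
  deriv (fun ε : ℝ =>
    sdet n θ (fun x => h x * Real.exp (ε * γ x)) ξ
      - eqRHS n θ p q f (fun x => h x * Real.exp (ε * γ x)) ξ) 0

/-- Endomorphism acting as `l·∇²u + cos θ·(∇u ⊗ e^T + e^T ⊗ ∇u) + uσ` on the tangent space
and as the identity on the normal line. -/
def capillaryOp (n : ℕ) (θ : ℝ) (u : Euc n → ℝ) (ξ : Euc n) : Euc n →L[ℝ] Euc n :=
  lFun n θ ξ • thessOp n θ u ξ
    + Real.cos θ • ((innerSL ℝ (sgrad n θ u ξ)).smulRight (tproj n θ ξ (eVec n))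
        + (innerSL ℝ (tproj n θ ξ (eVec n))).smulRight (sgrad n θ u ξ))
    + u ξ • tproj n θ ξ + normalPart n θ ξ

/-- Endomorphism acting as `∇²v + ∇v ⊗ ∇v + σ` on the tangent space and as the identity on
the normal line. -/
def logOp (n : ℕ) (θ : ℝ) (v : Euc n → ℝ) (ξ : Euc n) : Euc n →L[ℝ] Euc n :=
  thessOp n θ v ξ + (innerSL ℝ (sgrad n θ v ξ)).smulRight (sgrad n θ v ξ)
    + tproj n θ ξ + normalPart n θ ξ

/-- Geodesic distance on `C_θ` from `ξ` to the top point `N = (0,…,0,1-cos θ)`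
(for `θ ∈ (0,π/2)` the cap is geodesically convex, so this is `arccos ⟨ν(ξ), ν(N)⟩`). -/
def distToTop (n : ℕ) (θ : ℝ) (ξ : Euc n) : ℝ :=
  Real.arccos (ξ (Fin.last n) + Real.cos θ)

/-- The function `d := d_N²/(2θ)`. -/
def dCap (n : ℕ) (θ : ℝ) (ξ : Euc n) : ℝ := distToTop n θ ξ ^ 2 / (2 * θ)


/-- two-jet of a function of one real variable at zero -/
def J2 (φ : ℝ → ℝ) (a b c : ℝ) : Prop :=
  ∃ φ' : ℝ → ℝ, (∀ᶠ s in nhds (0:ℝ), HasDerivAt φ (φ' s) s) ∧ φ 0 = a ∧ φ' 0 = b ∧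
    HasDerivAt φ' c 0

theorem J2.congr {φ : ℝ → ℝ} {a b c a' b' c' : ℝ} (h : J2 φ a b c)
    (ha : a = a') (hb : b = b') (hc : c = c') : J2 φ a' b' c' := by
  subst ha hb hc; exact h

theorem J2.hasDerivAt {φ : ℝ → ℝ} {a b c : ℝ} (h : J2 φ a b c) : HasDerivAt φ b 0 := by
  obtain ⟨φ', h1, h2, h3, h4⟩ := h
  have := h1.self_of_nhds
  rwa [h3] at this

theorem J2.zero_eq {φ : ℝ → ℝ} {a b c : ℝ} (h : J2 φ a b c) : φ 0 = a := by
  obtain ⟨φ', h1, h2, h3, h4⟩ := h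
  exact h2

theorem J2.unique {φ ψ : ℝ → ℝ} {a b c a' b' c' : ℝ} (h : J2 φ a b c) (h' : J2 ψ a' b' c')
    (he : ∀ᶠ s in nhds (0:ℝ), φ s = ψ s) : a = a' ∧ b = b' ∧ c = c' := by
  obtain ⟨φ', h1, h2, h3, h4⟩ := h
  obtain ⟨ψ', k1, k2, k3, k4⟩ := h'
  have hev : φ' =ᶠ[nhds 0] ψ' := by
    filter_upwards [h1, k1, he.eventually_nhds] with s hs ks es
    exact hs.unique (ks.congr_of_eventuallyEq es)
  refine ⟨?_, ?_, ?_⟩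
  · rw [← h2, ← k2]; exact he.self_of_nhds
  · rw [← h3, ← k3]; exact hev.self_of_nhds
  · exact h4.unique (k4.congr_of_eventuallyEq hev)

theorem J2.const (a : ℝ) : J2 (fun _ => a) a 0 0 :=
  ⟨fun _ => 0, Filter.Eventually.of_forall (fun s => hasDerivAt_const s a), rfl, rfl,
    hasDerivAt_const 0 0⟩

theorem J2.lin (a b : ℝ) : J2 (fun s => a + s * b) a b 0 := by
  refine ⟨fun _ => b, Filter.Eventually.of_forall (fun s => ?_), by simp, rfl, hasDerivAt_const 0 b⟩
  simpa using ((hasDerivAt_id s).mul_const b).const_add a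

theorem J2.add {φ ψ : ℝ → ℝ} {a b c a' b' c' : ℝ} (h : J2 φ a b c) (h' : J2 ψ a' b' c') :
    J2 (fun s => φ s + ψ s) (a + a') (b + b') (c + c') := by
  obtain ⟨φ', h1, h2, h3, h4⟩ := h
  obtain ⟨ψ', k1, k2, k3, k4⟩ := h'
  refine ⟨fun s => φ' s + ψ' s, ?_, by simp only [h2, k2], by simp only [h3, k3], h4.add k4⟩
  filter_upwards [h1, k1] with s hs ks using hs.add ks

theorem J2.mul {φ ψ : ℝ → ℝ} {a b c a' b' c' : ℝ} (h : J2 φ a b c) (h' : J2 ψ a' b' c') :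
    J2 (fun s => φ s * ψ s) (a * a') (b * a' + a * b') (c * a' + 2 * (b * b') + a * c') := by
  have hd := h.hasDerivAt
  have kd := h'.hasDerivAt
  obtain ⟨φ', h1, h2, h3, h4⟩ := h
  obtain ⟨ψ', k1, k2, k3, k4⟩ := h'
  refine ⟨fun s => φ' s * ψ s + φ s * ψ' s, ?_, by simp only [h2, k2], by simp only [h3, k3, h2, k2], ?_⟩
  · filter_upwards [h1, k1] with s hs ks using hs.mul ks
  · have := (h4.mul kd).add (hd.mul k4)
    refine HasDerivAt.congr_deriv this ?_
    rw [h2, k2, h3, k3]; ring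

theorem J2.const_mul {φ : ℝ → ℝ} {a b c : ℝ} (r : ℝ) (h : J2 φ a b c) :
    J2 (fun s => r * φ s) (r * a) (r * b) (r * c) :=
  ((J2.const r).mul h).congr rfl (by ring) (by ring)

theorem J2.sub {φ ψ : ℝ → ℝ} {a b c a' b' c' : ℝ} (h : J2 φ a b c) (h' : J2 ψ a' b' c') :
    J2 (fun s => φ s - ψ s) (a - a') (b - b') (c - c') := by
  have := h.add (h'.const_mul (-1))
  simp only [neg_one_mul, ← sub_eq_add_neg] at this
  exact this

theorem J2.sum {ι : Type*} (S : Finset ι) {φ : ι → ℝ → ℝ} {a b c : ι → ℝ}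
    (h : ∀ i, J2 (φ i) (a i) (b i) (c i)) :
    J2 (fun s => ∑ i ∈ S, φ i s) (∑ i ∈ S, a i) (∑ i ∈ S, b i) (∑ i ∈ S, c i) := by
  classical
  induction S using Finset.induction_on with
  | empty => simpa using J2.const 0
  | insert i S hi ih =>
    simp only [Finset.sum_insert hi]
    exact (h i).add ih

theorem J2.log {φ : ℝ → ℝ} {a b c : ℝ} (h : J2 φ a b c) (ha : 0 < a) :
    J2 (fun s => Real.log (φ s)) (Real.log a) (b / a) (c / a - b ^ 2 / a ^ 2) := by
  have hd := h.hasDerivAt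
  obtain ⟨φ', h1, h2, h3, h4⟩ := h
  have hne : φ 0 ≠ 0 := by rw [h2]; exact ha.ne'
  refine ⟨fun s => φ' s / φ s, ?_, by simp only [h2], by simp only [h3, h2], ?_⟩
  · filter_upwards [h1, hd.continuousAt.eventually_ne hne] with s hs ks using hs.log ks
  · have := h4.div hd hne
    refine HasDerivAt.congr_deriv this ?_
    rw [h2, h3]; field_simp

theorem J2.localMax {φ : ℝ → ℝ} {a b c : ℝ} (h : J2 φ a b c)
    (hm : ∀ᶠ s in nhds (0:ℝ), φ s ≤ φ 0) : b = 0 ∧ c ≤ 0 := by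
  have hb : b = 0 := by
    have : IsLocalMax φ 0 := hm
    exact this.hasDerivAt_eq_zero h.hasDerivAt
  refine ⟨hb, ?_⟩
  by_contra hc
  push Not at hc
  obtain ⟨φ', h1, h2, h3, h4⟩ := h
  have hdd : deriv φ =ᶠ[nhds 0] φ' := by
    filter_upwards [h1] with s hs using hs.deriv
  have e1 : deriv (deriv φ) 0 = c := by rw [hdd.deriv_eq]; exact h4.deriv
  have e2 : deriv φ 0 = 0 := by rw [hdd.self_of_nhds, h3, hb]
  have hmin := isLocalMin_of_deriv_deriv_pos (f := φ) (x₀ := 0) (by rw [e1]; exact hc) e2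
    (h1.self_of_nhds.continuousAt)
  have hconst : φ =ᶠ[nhds 0] fun _ => φ 0 := by
    filter_upwards [hm, hmin] with s hs ks using le_antisymm hs ks
  have : deriv (deriv φ) 0 = 0 := by
    rw [(hconst.deriv).deriv_eq]; simp
  linarith

/-! determinants -/

def detPi {ι : Type*} [Fintype ι] [DecidableEq ι] (f : ι → ι → ℝ) : ℝ := (Matrix.of f).det

theorem detPi_diff {ι : Type*} [Fintype ι] [DecidableEq ι] :
    Differentiable ℝ (detPi : (ι → ι → ℝ) → ℝ) := by
  have : (detPi : (ι → ι → ℝ) → ℝ) = fun f => ∑ σ : Equiv.Perm ι,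
      ((Equiv.Perm.sign σ : ℤ) : ℝ) * ∏ i, f (σ i) i := by
    funext f; simp [detPi, Matrix.det_apply']
  rw [this]
  fun_prop

theorem detPi_fderiv {ι : Type*} [Fintype ι] [DecidableEq ι] (M X : ι → ι → ℝ)
    (hM : (Matrix.of M).det ≠ 0) :
    fderiv ℝ (detPi : (ι → ι → ℝ) → ℝ) M X =
      (Matrix.of M).det * ((Matrix.of M)⁻¹ * Matrix.of X).trace := by
  have h1 : HasDerivAt (fun t : ℝ => detPi (M + t • X))
      (fderiv ℝ (detPi : (ι → ι → ℝ) → ℝ) M X) 0 := by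
    have hf : HasFDerivAt (detPi : (ι → ι → ℝ) → ℝ) (fderiv ℝ detPi M)
      (M + (0:ℝ) • X) := by
      simpa using (detPi_diff M).hasFDerivAt
    have hl : HasDerivAt (fun t : ℝ => M + t • X) X 0 := by
      simpa using ((hasDerivAt_id (0:ℝ)).smul_const X).const_add M
    exact hf.comp_hasDerivAt 0 hl
  have h2 : ∀ t : ℝ, detPi (M + t • X)
      = (Matrix.of M).det * (1 + t • ((Matrix.of M)⁻¹ * Matrix.of X)).det := by
    intro t
    rw [← Matrix.det_mul, mul_add, mul_one, mul_smul_comm, ← mul_assoc,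
      Matrix.mul_nonsing_inv _ (isUnit_iff_ne_zero.mpr hM), one_mul]
    rfl
  have h3 : HasDerivAt (fun t : ℝ => detPi (M + t • X))
      ((Matrix.of M).det * ((Matrix.of M)⁻¹ * Matrix.of X).trace) 0 := by
    rw [funext h2]
    apply HasDerivAt.const_mul
    rw [funext fun t : ℝ => Matrix.det_one_add_smul t ((Matrix.of M)⁻¹ * Matrix.of X)]
    set P := Polynomial.divX (Polynomial.divX ((1 + (Polynomial.X : Polynomial ℝ) •
      ((Matrix.of M)⁻¹ * Matrix.of X).map Polynomial.C).det))
    have hp : HasDerivAt (fun t : ℝ => P.eval t) (P.derivative.eval 0) 0 := P.hasDerivAt 0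
    have := (((hasDerivAt_id (0:ℝ)).const_mul (((Matrix.of M)⁻¹ * Matrix.of X).trace)).const_add 1).add
      (hp.mul ((hasDerivAt_id (0:ℝ)).pow 2))
    refine HasDerivAt.congr_deriv this ?_
    simp
  exact h1.unique h3

theorem det_hasDerivAt {ι : Type*} [Fintype ι] [DecidableEq ι] {m : ι → ι → ℝ → ℝ}
    {m' : ι → ι → ℝ} {s : ℝ} (h : ∀ i j, HasDerivAt (m i j) (m' i j) s) 
    (hM : (Matrix.of fun i j => m i j s).det ≠ 0) :
    HasDerivAt (fun s => (Matrix.of fun i j => m i j s).det)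
      ((Matrix.of fun i j => m i j s).det *
        ((Matrix.of fun i j => m i j s)⁻¹ * (Matrix.of m')).trace) s := by
  rw [← detPi_fderiv _ _ hM]
  have hl : HasDerivAt (fun s => (fun i j => m i j s : ι → ι → ℝ)) m' s :=
    hasDerivAt_pi.2 fun i => hasDerivAt_pi.2 fun j => h i j
  exact ((detPi_diff _).hasFDerivAt (x := (fun i j => m i j s : ι → ι → ℝ))).comp_hasDerivAt s hl

theorem det_diffAt {ι : Type*} [Fintype ι] [DecidableEq ι] {m : ι → ι → ℝ → ℝ}
    {s : ℝ} (h : ∀ i j, DifferentiableAt ℝ (m i j) s) :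
    DifferentiableAt ℝ (fun s => (Matrix.of fun i j => m i j s).det) s := by
  have hl : DifferentiableAt ℝ (fun s => (fun i j => m i j s : ι → ι → ℝ)) s :=
    differentiableAt_pi.2 fun i => differentiableAt_pi.2 fun j => h i j
  exact DifferentiableAt.comp (g := detPi) s (detPi_diff _) hl

theorem inv_diffAt {ι : Type*} [Fintype ι] [DecidableEq ι] {m : ι → ι → ℝ → ℝ}
    {s : ℝ} (h : ∀ i j, DifferentiableAt ℝ (m i j) s) 
    (hM : (Matrix.of fun i j => m i j s).det ≠ 0) (k l : ι) :
    DifferentiableAt ℝ (fun s => (Matrix.of fun i j => m i j s)⁻¹ k l) s := by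
  simp only [Matrix.inv_def, Matrix.smul_apply, Ring.inverse_eq_inv', smul_eq_mul,
    Matrix.adjugate_apply]
  refine ((det_diffAt h).inv hM).mul ?_
  have : ∀ s, (Matrix.updateRow (Matrix.of fun i j => m i j s) l (Pi.single k 1)) =
      Matrix.of fun i j => (if i = l then (Pi.single k 1 : ι → ℝ) j else m i j s) := by
    intro s; ext i j
    by_cases hi : i = l
    · subst hi; simp
    · simp [hi]
  simp only [this]
  apply det_diffAt (m := fun i j s => (if i = l then (Pi.single k 1 : ι → ℝ) j else m i j s))
  intro i j
  by_cases hi : i = l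
  · simp [hi]
  · simpa [hi] using h i j

theorem J2.logdet {ι : Type*} [Fintype ι] [DecidableEq ι] {m : ι → ι → ℝ → ℝ}
    {l : ι → ℝ} {T Q : ι → ι → ℝ} (hl : ∀ i, 0 < l i)
    (h : ∀ i j, J2 (m i j) (if i = j then l i else 0) (T i j) (Q i j)) :
    J2 (fun s => Real.log (Matrix.of fun i j => m i j s).det) (∑ i, Real.log (l i))
      (∑ i, T i i / l i) (∑ i, Q i i / l i - ∑ i, ∑ j, T i j * T j i / (l i * l j)) := by
  have h0 := h
  choose m' h1 h2 h3 h4 using h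
  have e0 : (Matrix.of fun i j => m i j 0) = Matrix.diagonal l := by
    ext i j; simp [h2, Matrix.diagonal_apply]
  have d0 : (Matrix.of fun i j => m i j 0).det = ∏ i, l i := by rw [e0, Matrix.det_diagonal]
  have dpos : 0 < (Matrix.of fun i j => m i j 0).det := by
    rw [d0]; exact Finset.prod_pos fun i _ => hl i
  have i0 : (Matrix.of fun i j => m i j 0)⁻¹ = Matrix.diagonal (fun i => (l i)⁻¹) := by
    rw [e0]
    apply Matrix.inv_eq_right_inv
    rw [Matrix.diagonal_mul_diagonal, ← Matrix.diagonal_one]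
    congr 1; funext i; exact mul_inv_cancel₀ (hl i).ne'
  have hda : ∀ i j, DifferentiableAt ℝ (m i j) 0 := fun i j => (h0 i j).hasDerivAt.differentiableAt
  have hdetc := (det_diffAt hda).continuousAt.eventually_ne dpos.ne'
  have hev : ∀ᶠ s in nhds (0:ℝ), ∀ i j, HasDerivAt (m i j) (m' i j s) s := by
    rw [Filter.eventually_all]; intro i
    rw [Filter.eventually_all]; intro j
    exact h1 i j
  refine ⟨fun s => ∑ i, ∑ j, (Matrix.of fun i j => m i j s)⁻¹ i j * m' j i s, ?_, ?_, ?_, ?_⟩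
  · filter_upwards [hdetc, hev] with s hs hs'
    have := (det_hasDerivAt hs' hs).log hs
    refine HasDerivAt.congr_deriv this ?_
    rw [mul_div_assoc, mul_comm, div_mul_cancel₀ _ hs]
    simp [Matrix.trace, Matrix.mul_apply]
  · simp only; rw [d0, Real.log_prod]; exact fun i _ => (hl i).ne'
  · simp only [i0, h3]
    simp only [Matrix.diagonal_apply, ite_mul, zero_mul, Finset.sum_ite_eq, Finset.mem_univ, if_true]
    refine Finset.sum_congr rfl fun i _ => by rw [div_eq_inv_mul]
  · set N : ι → ι → ℝ → ℝ := fun i j s => (Matrix.of fun i j => m i j s)⁻¹ i j with hN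
    have hNd : ∀ i j, HasDerivAt (N i j) (deriv (N i j) 0) 0 := fun i j =>
      (inv_diffAt hda dpos.ne' i j).hasDerivAt
    have hN0 : ∀ i j, N i j 0 = if i = j then (l i)⁻¹ else 0 := by
      intro i j; simp only [hN]; rw [i0, Matrix.diagonal_apply]
    have hNval : ∀ i j, deriv (N i j) 0 = - (T i j / (l i * l j)) := by
      intro i k
      have hsum : HasDerivAt (fun s => ∑ j, N i j s * m j k s)
          (∑ j, (deriv (N i j) 0 * m j k 0 + N i j 0 * T j k)) 0 := by
        apply HasDerivAt.fun_sum
        intro j _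
        exact (hNd i j).mul (h0 j k).hasDerivAt
      have hc : (fun s => ∑ j, N i j s * m j k s) =ᶠ[nhds 0] fun _ => (1 : Matrix ι ι ℝ) i k := by
        filter_upwards [hdetc] with s hs
        rw [← Matrix.nonsing_inv_mul (Matrix.of fun i j => m i j s) (isUnit_iff_ne_zero.mpr hs)]
        simp [Matrix.mul_apply, hN]
      have hz := hsum.unique ((hasDerivAt_const (0:ℝ) ((1 : Matrix ι ι ℝ) i k)).congr_of_eventuallyEq hc)
      simp only [h2, hN0, Finset.sum_add_distrib, mul_ite, mul_zero, ite_mul, zero_mul,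
        Finset.sum_ite_eq, Finset.sum_ite_eq', Finset.mem_univ, if_true] at hz
      have hli := (hl i).ne'
      have hlk := (hl k).ne'
      field_simp at hz ⊢
      linarith
    have : HasDerivAt (fun s => ∑ i, ∑ j, N i j s * m' j i s)
        (∑ i, ∑ j, (deriv (N i j) 0 * m' j i 0 + N i j 0 * Q j i)) 0 := by
      apply HasDerivAt.fun_sum
      intro i _
      apply HasDerivAt.fun_sum
      intro j _
      exact (hNd i j).mul (h4 j i)
    refine HasDerivAt.congr_deriv this ?_
    simp only [hNval, h3, hN0, Finset.sum_add_distrib, ite_mul, zero_mul, Finset.sum_ite_eq,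
      Finset.mem_univ, if_true]
    have e1 : ∑ i, (l i)⁻¹ * Q i i = ∑ i, Q i i / l i :=
      Finset.sum_congr rfl fun i _ => by rw [div_eq_inv_mul]
    have e2 : ∑ i, ∑ j, -(T i j / (l i * l j)) * T j i = - ∑ i, ∑ j, T i j * T j i / (l i * l j) := by
      rw [← Finset.sum_neg_distrib]
      refine Finset.sum_congr rfl fun i _ => ?_
      rw [← Finset.sum_neg_distrib]
      refine Finset.sum_congr rfl fun j _ => ?_
      ring
    rw [e1, e2]; ring


section ddcalc
variable {E : Type*} [NormedAddCommGroup E] [InnerProductSpace ℝ E]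

/-- directional derivative -/
def dd (e : E) (f : E → ℝ) (y : E) : ℝ := fderiv ℝ f y e

theorem dd_contDiff {f : E → ℝ} (hf : ContDiff ℝ (⊤ : ℕ∞) f) (e : E) :
    ContDiff ℝ (⊤ : ℕ∞) (dd e f) := by
  have h1 : ContDiff ℝ (⊤ : ℕ∞) (fderiv ℝ f) := hf.fderiv_right (by exact_mod_cast le_top)
  exact h1.clm_apply contDiff_const

theorem fderiv_contDiff {f : E → ℝ} (hf : ContDiff ℝ (⊤ : ℕ∞) f) :
    ContDiff ℝ (⊤ : ℕ∞) (fderiv ℝ f) := hf.fderiv_right (by exact_mod_cast le_top)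

theorem smooth_diff {F : Type*} [NormedAddCommGroup F] [NormedSpace ℝ F] {f : E → F}
    (hf : ContDiff ℝ (⊤ : ℕ∞) f) : Differentiable ℝ f :=
  hf.differentiable (by simp)

theorem dd_dd {f : E → ℝ} (hf : ContDiff ℝ (⊤ : ℕ∞) f) (a b y : E) :
    dd a (dd b f) y = fderiv ℝ (fderiv ℝ f) y a b := by
  have h1 : DifferentiableAt ℝ (fderiv ℝ f) y := smooth_diff (fderiv_contDiff hf) y
  unfold dd
  rw [fderiv_clm_apply h1 (differentiableAt_const b)]
  simp

theorem dd_comm {f : E → ℝ} (hf : ContDiff ℝ (⊤ : ℕ∞) f) (a b : E) :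
    dd a (dd b f) = dd b (dd a f) := by
  funext y
  rw [dd_dd hf, dd_dd hf]
  have : IsSymmSndFDerivAt ℝ f y :=
    hf.contDiffAt.isSymmSndFDerivAt (by
      rw [minSmoothness_of_isRCLikeNormedField]
      exact WithTop.coe_le_coe.mpr (le_top : (2:ℕ∞) ≤ ⊤))
  exact this a b

theorem dd_hasDerivAt {f : E → ℝ} (hf : ContDiff ℝ (⊤ : ℕ∞) f) (y e : E) (s : ℝ) :
    HasDerivAt (fun s : ℝ => f (y + s • e)) (dd e f (y + s • e)) s := by
  have hl : HasDerivAt (fun s : ℝ => y + s • e) e s := by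
    simpa using ((hasDerivAt_id s).smul_const e).const_add y
  exact ((smooth_diff hf (y + s • e)).hasFDerivAt).comp_hasDerivAt s hl

theorem dd_jet {f : E → ℝ} (hf : ContDiff ℝ (⊤ : ℕ∞) f) (y e : E) :
    J2 (fun s : ℝ => f (y + s • e)) (f y) (dd e f y) (dd e (dd e f) y) := by
  refine ⟨fun s => dd e f (y + s • e), Filter.Eventually.of_forall fun s => dd_hasDerivAt hf y e s,
    by simp, by simp, ?_⟩
  have := dd_hasDerivAt (dd_contDiff hf e) y e 0
  simpa using this

theorem dd_smul (c : ℝ) (e : E) (f : E → ℝ) (y : E) : dd (c • e) f y = c * dd e f y := by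
  simp [dd]

theorem dd_sum {ι : Type*} [Fintype ι] (b : OrthonormalBasis ι ℝ E) (a : E) (f : E → ℝ) (y : E) :
    dd a f y = ∑ k, ⟪b k, a⟫ * dd (b k) f y := by
  unfold dd
  conv_lhs => rw [← b.sum_repr a]
  simp [b.repr_apply_apply]

theorem support_ineq {R : ℝ} {v : E → ℝ} (hv : ContDiff ℝ (⊤ : ℕ∞) v)
    (hconv : ∀ y, ‖y‖ ≤ R → ∀ e, 0 ≤ dd e (dd e v) y) {y z : E} (hy : ‖y‖ ≤ R) (hz : ‖z‖ ≤ R) :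
    v y + dd (z - y) v y ≤ v z := by
  set d := z - y with hd
  have hin : ∀ s : ℝ, s ∈ Icc (0:ℝ) 1 → ‖y + s • d‖ ≤ R := by
    intro s hs
    have h := (convex_closedBall (0:E) R).add_smul_sub_mem (x := y) (y := z) (by simpa) (by simpa) hs
    simpa [hd] using h
  have h1 := fun s => dd_hasDerivAt hv y d s
  have h2 := fun s => dd_hasDerivAt (dd_contDiff hv d) y d s
  obtain ⟨c, hc, hc'⟩ := exists_hasDerivAt_eq_slope (fun s : ℝ => v (y + s • d))
    (fun s => dd d v (y + s • d)) (by norm_num : (0:ℝ) < 1)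
    (fun s _ => (h1 s).continuousAt.continuousWithinAt) (fun s _ => h1 s)
  obtain ⟨c2, hc2, hc2'⟩ := exists_hasDerivAt_eq_slope (fun s : ℝ => dd d v (y + s • d))
    (fun s => dd d (dd d v) (y + s • d)) hc.1
    (fun s _ => (h2 s).continuousAt.continuousWithinAt) (fun s _ => h2 s)
  have hpos := hconv (y + c2 • d) (hin c2 ⟨hc2.1.le, (hc2.2.trans hc.2).le⟩) d
  rw [hc2', sub_zero] at hpos
  have hcpos := hc.1
  have h3 : 0 ≤ dd d v (y + c • d) - dd d v y := by
    have := mul_nonneg hpos hcpos.le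
    rw [div_mul_cancel₀ _ hcpos.ne'] at this
    simpa using this
  have h4 : y + (1:ℝ) • d = z := by simp [hd]
  simp only [h4, zero_smul, add_zero, sub_zero, div_one] at hc'
  linarith

theorem grad_bound {R M : ℝ} (hR : 0 < R) {v : E → ℝ} (hv : ContDiff ℝ (⊤ : ℕ∞) v)
    (hconv : ∀ y, ‖y‖ ≤ R → ∀ e, 0 ≤ dd e (dd e v) y)
    (hb : ∀ y, ‖y‖ = R → dd y v y = v y) (hM : ∀ y, ‖y‖ ≤ R → v y ≤ M) :
    ∀ y, ‖y‖ ≤ R → ∀ e, ‖e‖ = 1 → dd e v y ≤ M / R := by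
  have hbd : ∀ y, ‖y‖ = R → ∀ e, ‖e‖ = 1 → dd e v y ≤ M / R := by
    intro y hy e he
    have hz : ‖R • e‖ ≤ R := by rw [norm_smul, he, mul_one, Real.norm_of_nonneg hR.le]
    have h := support_ineq hv hconv hy.le hz
    have h1 : dd (R • e - y) v y = R * dd e v y - dd y v y := by simp [dd]
    rw [h1, hb y hy] at h
    rw [le_div_iff₀ hR]
    have := hM _ hz
    linarith
  intro y hy e he
  obtain ⟨t, ht, ht'⟩ : ∃ t ∈ Icc (0:ℝ) (2 * R), ‖y + t • e‖ = R := by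
    have hc : ContinuousOn (fun t : ℝ => ‖y + t • e‖) (Icc 0 (2 * R)) := by fun_prop
    have := intermediate_value_Icc (by positivity : (0:ℝ) ≤ 2 * R) hc
    have hmem : R ∈ Icc ‖y + (0:ℝ) • e‖ ‖y + (2 * R) • e‖ := by
      constructor
      · simpa using hy
      · have h1 : ‖(2 * R) • e‖ = 2 * R := by
          rw [norm_smul, he, mul_one, Real.norm_of_nonneg (by positivity)]
        have h2 := norm_sub_norm_le ((2 * R) • e) (-y)
        rw [sub_neg_eq_add, norm_neg, h1, add_comm] at h2
        linarith
    obtain ⟨t, ht, h⟩ := this hmem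
    exact ⟨t, ht, h⟩
  rcases eq_or_lt_of_le ht.1 with h0 | h0
  · rw [← h0] at ht'
    simp only [zero_smul, add_zero] at ht'
    exact hbd y ht' e he
  · have h1 := support_ineq hv hconv hy ht'.le
    have h2 := support_ineq hv hconv ht'.le hy
    have e1 : dd (y + t • e - y) v y = t * dd e v y := by simp [dd]
    have e2 : dd (y - (y + t • e)) v (y + t • e) = - (t * dd e v (y + t • e)) := by simp [dd]
    rw [e1] at h1; rw [e2] at h2
    have h3 := hbd _ ht' e he
    have : t * dd e v y ≤ t * dd e v (y + t • e) := by linarith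
    exact (le_of_mul_le_mul_left this h0).trans h3

theorem eigen_exists [FiniteDimensional ℝ E] {n : ℕ} (hn : Module.finrank ℝ E = n) {v : E → ℝ}
    (hv : ContDiff ℝ (⊤ : ℕ∞) v) (y : E) :
    ∃ (b : OrthonormalBasis (Fin n) ℝ E) (l : Fin n → ℝ),
      ∀ i a, dd a (dd (b i) v) y = l i * ⟪b i, a⟫ := by
  let A : E →ₗ[ℝ] E :=
    ((InnerProductSpace.toDual ℝ E).symm.toLinearEquiv.toLinearMap).comp
      (fderiv ℝ (fderiv ℝ v) y).toLinearMap
  have hA : ∀ a c, ⟪A a, c⟫ = dd a (dd c v) y := by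
    intro a c
    rw [dd_dd hv]
    simp [A]
  have hs : A.IsSymmetric := by
    intro a c
    rw [hA, real_inner_comm, hA, dd_comm hv]
  refine ⟨hs.eigenvectorBasis hn, hs.eigenvalues hn, fun i a => ?_⟩
  rw [dd_comm hv, ← hA, hs.apply_eigenvectorBasis]
  simp [inner_smul_left]
end ddcalc


section flat
variable {E : Type*} [NormedAddCommGroup E] [InnerProductSpace ℝ E]

/-- squared norm of the gradient -/
def gsq (v : E → ℝ) (y : E) : ℝ := ‖fderiv ℝ v y‖ ^ 2

def wf (v : E → ℝ) (y : E) : ℝ := dd y v y - v y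

def rhof (v : E → ℝ) (y : E) : ℝ := gsq v y + wf v y ^ 2

def Kf (R : ℝ) (v : E → ℝ) (y : E) : ℝ := 1 / 2 * gsq v y - 1 / R ^ 2 * (v y * dd y v y)

theorem gsq_eq {ι : Type*} [Fintype ι] (b : OrthonormalBasis ι ℝ E) (v : E → ℝ) (y : E) :
    gsq v y = ∑ k, dd (b k) v y * dd (b k) v y := by
  have : FiniteDimensional ℝ E := b.toBasis.finiteDimensional_of_finite
  have h1 : ‖fderiv ℝ v y‖ = ‖(InnerProductSpace.toDual ℝ E).symm (fderiv ℝ v y)‖ := by simp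
  unfold gsq
  rw [h1, ← b.sum_sq_norm_inner_left]
  refine Finset.sum_congr rfl fun k _ => ?_
  rw [InnerProductSpace.toDual_symm_apply]
  simp [dd, sq]

theorem dd_self_eq {ι : Type*} [Fintype ι] (b : OrthonormalBasis ι ℝ E) (v : E → ℝ) (y : E) :
    dd y v y = ∑ k, ⟪b k, y⟫ * dd (b k) v y := dd_sum b y v y

variable {n : ℕ} (b : OrthonormalBasis (Fin n) ℝ E) {l : Fin n → ℝ} {v : E → ℝ}
  (hv : ContDiff ℝ (⊤ : ℕ∞) v) {y0 : E} (hl : ∀ i a, dd a (dd (b i) v) y0 = l i * ⟪b i, a⟫)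

theorem binner (i j : Fin n) : ⟪b i, b j⟫ = if i = j then (1:ℝ) else 0 :=
  orthonormal_iff_ite.mp b.orthonormal i j

/-- third derivatives -/
def t3 (v : E → ℝ) (y0 : E) (i j k : Fin n) : ℝ := dd (b i) (dd (b j) (dd (b k) v)) y0

include hv in
theorem t3_swap12 (i j k : Fin n) : t3 b v y0 i j k = t3 b v y0 j i k := by
  unfold t3; rw [dd_comm (dd_contDiff hv _)]

include hv in
theorem t3_swap23 (i j k : Fin n) : t3 b v y0 i j k = t3 b v y0 i k j := by
  unfold t3; rw [dd_comm hv (b j) (b k)]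

/-- fourth derivatives -/
def q4 (v : E → ℝ) (y0 : E) (i j : Fin n) : ℝ := dd (b i) (dd (b i) (dd (b j) (dd (b j) v))) y0

include hv in
theorem q4_symm (i j : Fin n) : q4 b v y0 i j = q4 b v y0 j i := by
  unfold q4
  rw [dd_comm (dd_contDiff hv (b j)) (b i) (b j), dd_comm hv (b i) (b j),
    dd_comm (dd_contDiff (dd_contDiff hv _) _) (b i) (b j),
    dd_comm (dd_contDiff hv (b i)) (b i) (b j)]

include hv hl in
theorem jet_v (i : Fin n) : J2 (fun s : ℝ => v (y0 + s • b i)) (v y0) (dd (b i) v y0) (l i) :=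
  (dd_jet hv y0 (b i)).congr rfl rfl (by rw [hl, binner]; simp)

include hv hl in
theorem jet_vk (i k : Fin n) : J2 (fun s : ℝ => dd (b k) v (y0 + s • b i)) (dd (b k) v y0)
    (if k = i then l k else 0) (t3 b v y0 i i k) :=
  (dd_jet (dd_contDiff hv (b k)) y0 (b i)).congr rfl (by rw [hl, binner]; simp) rfl

omit hl hv in
theorem jet_y (i k : Fin n) : J2 (fun s : ℝ => ⟪b k, y0 + s • b i⟫) ⟪b k, y0⟫
    (if k = i then 1 else 0) 0 := by
  have h : (fun s : ℝ => ⟪b k, y0 + s • b i⟫) = fun s => ⟪b k, y0⟫ + s * (if k = i then 1 else 0) := by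
    funext s; rw [inner_add_right, inner_smul_right, binner]
  rw [h]; exact J2.lin _ _

include hv hl in
theorem jet_gsq (i : Fin n) : J2 (fun s : ℝ => gsq v (y0 + s • b i)) (gsq v y0)
    (2 * (l i * dd (b i) v y0))
    (2 * l i ^ 2 + 2 * ∑ k, dd (b k) v y0 * t3 b v y0 i i k) := by
  simp only [gsq_eq b]
  refine (J2.sum Finset.univ fun k => (jet_vk b hv hl i k).mul (jet_vk b hv hl i k)).congr rfl ?_ ?_
  · simp only [mul_ite, ite_mul, mul_zero, zero_mul, Finset.sum_add_distrib, Finset.sum_ite_eq',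
      Finset.mem_univ, if_true]
    ring
  · simp only [mul_ite, ite_mul, mul_zero, zero_mul, Finset.sum_add_distrib, Finset.sum_ite_eq',
      Finset.mem_univ, if_true]
    rw [Finset.mul_sum]
    have : ∑ k, t3 b v y0 i i k * dd (b k) v y0 = ∑ k, dd (b k) v y0 * t3 b v y0 i i k :=
      Finset.sum_congr rfl fun k _ => mul_comm _ _
    rw [this, ← Finset.mul_sum]; ring

include hv hl in
theorem jet_Y (i : Fin n) : J2 (fun s : ℝ => dd (y0 + s • b i) v (y0 + s • b i)) (dd y0 v y0)
    (dd (b i) v y0 + l i * ⟪b i, y0⟫)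
    (2 * l i + ∑ k, ⟪b k, y0⟫ * t3 b v y0 i i k) := by
  simp only [dd_self_eq b]
  refine (J2.sum Finset.univ fun k => (jet_y b i k).mul (jet_vk b hv hl i k)).congr rfl ?_ ?_
  · simp only [mul_ite, ite_mul, mul_zero, zero_mul, one_mul, Finset.sum_add_distrib,
      Finset.sum_ite_eq', Finset.mem_univ, if_true]
    ring
  · simp only [mul_ite, ite_mul, mul_zero, zero_mul, one_mul, Finset.sum_add_distrib,
      Finset.sum_ite_eq', Finset.mem_univ, if_true, Finset.sum_const_zero]
    ring

include hv hl in
theorem jet_w (i : Fin n) : J2 (fun s : ℝ => wf v (y0 + s • b i)) (wf v y0)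
    (l i * ⟪b i, y0⟫) (l i + ∑ k, ⟪b k, y0⟫ * t3 b v y0 i i k) :=
  ((jet_Y b hv hl i).sub (jet_v b hv hl i)).congr rfl (by ring) (by ring)

include hv hl in
theorem jet_rho (i : Fin n) : J2 (fun s : ℝ => rhof v (y0 + s • b i)) (rhof v y0)
    (2 * l i * (dd (b i) v y0 + wf v y0 * ⟪b i, y0⟫))
    (2 * (l i ^ 2 + ∑ k, (dd (b k) v y0 + wf v y0 * ⟪b k, y0⟫) * t3 b v y0 i i k
      + l i ^ 2 * ⟪b i, y0⟫ ^ 2 + wf v y0 * l i)) := by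
  have h := (jet_gsq b hv hl i).add ((jet_w b hv hl i).mul (jet_w b hv hl i))
  simp only [rhof, sq (wf v _)]
  refine h.congr rfl (by ring) ?_
  simp only [add_mul, Finset.sum_add_distrib, mul_assoc]
  rw [← Finset.mul_sum]
  ring

include hv hl in
theorem jet_K (R : ℝ) (i : Fin n) : J2 (fun s : ℝ => Kf R v (y0 + s • b i)) (Kf R v y0)
    (l i * (dd (b i) v y0 - v y0 / R ^ 2 * ⟪b i, y0⟫) - dd (b i) v y0 * (dd y0 v y0 + v y0) / R ^ 2)
    (l i ^ 2 + ∑ k, (dd (b k) v y0 - v y0 / R ^ 2 * ⟪b k, y0⟫) * t3 b v y0 i i k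
      - (l i * dd y0 v y0 + 2 * dd (b i) v y0 * (dd (b i) v y0 + l i * ⟪b i, y0⟫)
        + 2 * v y0 * l i) / R ^ 2) := by
  have h := ((jet_gsq b hv hl i).const_mul (1 / 2)).sub
    (((jet_v b hv hl i).mul (jet_Y b hv hl i)).const_mul (1 / R ^ 2))
  refine h.congr rfl (by ring) ?_
  simp only [sub_mul, Finset.sum_sub_distrib, mul_assoc]
  rw [← Finset.mul_sum]
  ring

include hv hl in
theorem jet_vmm (i m : Fin n) : J2 (fun s : ℝ => dd (b m) (dd (b m) v) (y0 + s • b i)) (l m)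
    (t3 b v y0 i m m) (q4 b v y0 i m) :=
  (dd_jet (dd_contDiff (dd_contDiff hv (b m)) (b m)) y0 (b i)).congr
    (by rw [hl, binner]; simp) rfl rfl

include hv hl in
theorem jet_logdet (hpos : ∀ i, 0 < l i) (m : Fin n) :
    J2 (fun s : ℝ => Real.log (Matrix.of fun i j => dd (b i) (dd (b j) v) (y0 + s • b m)).det)
      (∑ i, Real.log (l i)) (∑ i, t3 b v y0 m i i / l i)
      (∑ i, q4 b v y0 m i / l i - ∑ i, ∑ j, t3 b v y0 m i j ^ 2 / (l i * l j)) := by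
  have h := J2.logdet (m := fun i j s => dd (b i) (dd (b j) v) (y0 + s • b m)) (l := l)
    (T := fun i j => t3 b v y0 m i j)
    (Q := fun i j => dd (b m) (dd (b m) (dd (b i) (dd (b j) v))) y0) hpos
    (fun i j => (dd_jet (dd_contDiff (dd_contDiff hv (b j)) (b i)) y0 (b m)).congr
      (by rw [hl, binner]
          by_cases hij : i = j
          · subst hij; simp
          · simp [hij, Ne.symm hij]) rfl rfl)
  refine h.congr rfl rfl ?_
  congr 1
  refine Finset.sum_congr rfl fun i _ => Finset.sum_congr rfl fun j _ => ?_
  rw [t3_swap23 b hv m j i, sq]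
end flat


theorem interior_algebra {n : ℕ} (vk yk l ζ Z g1 : Fin n → ℝ) (t : Fin n → Fin n → Fin n → ℝ)
    (q : Fin n → Fin n → ℝ) (V R B a α β ρ w Y g2 : ℝ) (m : Fin n)
    (hl : ∀ i, 0 < l i) (hV : 0 < V) (hR : 0 < R) (hρ : 0 < ρ)
    (hB : 0 ≤ B) (ha : 2 * B * V ^ 2 ≤ a * R ^ 2)
    (hY : Y = ∑ k, yk k * vk k)
    (t12 : ∀ i j k, t i j k = t j i k) (t23 : ∀ i j k, t i j k = t i k j)
    (qs : ∀ i j, q i j = q j i)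
    (H1 : ∀ k, t k m m / l m + B * (l k * ζ k - vk k * (Y + V) / R ^ 2) - a * (vk k / V) = 0)
    (H2 : ∀ i, (q i m / l m - t i m m ^ 2 / l m ^ 2) +
      B * (l i ^ 2 + ∑ k, ζ k * t i i k - (l i * Y + 2 * vk i * (vk i + l i * yk i)
        + 2 * V * l i) / R ^ 2) - a * (l i / V - vk i ^ 2 / V ^ 2) ≤ 0)
    (H3 : ∀ k, ∑ i, t k i i / l i = g1 k + α * (vk k / V) + β * (2 * l k * Z k / ρ))
    (H4 : ∑ i, q m i / l i - ∑ i, ∑ j, t m i j ^ 2 / (l i * l j) =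
      g2 + α * (l m / V - vk m ^ 2 / V ^ 2) + β * (2 * (l m ^ 2 + ∑ k, Z k * t m m k
        + l m ^ 2 * yk m ^ 2 + w * l m) / ρ - (2 * l m * Z m) ^ 2 / ρ ^ 2)) :
    g2 / l m + α * (1 / V - vk m ^ 2 / (V ^ 2 * l m)) +
      β * (2 * (l m * (1 + yk m ^ 2) + w) / ρ - 4 * l m * Z m ^ 2 / ρ ^ 2)
      + 2 * β / ρ * (B * (Y + V) / R ^ 2 * (∑ k, vk k * Z k) + a * (∑ k, vk k * Z k) / V)
      + B * (∑ i, l i + ∑ k, ζ k * (g1 k + α * (vk k / V)) - (n * Y + 2 * Y + 2 * n * V) / R ^ 2)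
      - a * n / V ≤ 0 := by
  have hlm := hl m
  set D := ∑ i, vk i ^ 2 / l i with hD
  have hD0 : 0 ≤ D := Finset.sum_nonneg fun i _ => div_nonneg (sq_nonneg _) (hl i).le
  set X := ∑ k, l k * ζ k * Z k with hX
  set S1 := ∑ k, vk k * Z k with hS1
  -- critical point equation paired with Z
  have hZt : ∑ k, Z k * t m m k = l m * (- B * X + B * (Y + V) / R ^ 2 * S1 + a * S1 / V) := by
    have : ∀ k, Z k * t m m k = l m * (- B * (l k * ζ k * Z k) + B * (Y + V) / R ^ 2 * (vk k * Z k)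
        + a * (vk k * Z k) / V) := by
      intro k
      have h := H1 k
      have e : t m m k = t k m m := by rw [t23, t12]
      have : t k m m = l m * (a * (vk k / V) - B * (l k * ζ k - vk k * (Y + V) / R ^ 2)) := by
        field_simp at h ⊢
        linarith
      rw [e, this]; field_simp; ring
    rw [Finset.sum_congr rfl fun k _ => this k, ← Finset.mul_sum, Finset.sum_add_distrib,
      Finset.sum_add_distrib, ← Finset.mul_sum, ← Finset.mul_sum, ← Finset.sum_div, ← Finset.mul_sum]
  -- third order sum
  have h3 : ∑ i, (∑ k, ζ k * t i i k) / l i =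
      ∑ k, ζ k * (g1 k + α * (vk k / V)) + 2 * β / ρ * X := by
    have e1 : ∀ i, (∑ k, ζ k * t i i k) / l i = ∑ k, ζ k * (t k i i / l i) := by
      intro i
      rw [Finset.sum_div]
      refine Finset.sum_congr rfl fun k _ => ?_
      rw [t23 i i k, t12 i k i, mul_div_assoc]
    rw [Finset.sum_congr rfl fun i _ => e1 i, Finset.sum_comm, hX, Finset.mul_sum,
      ← Finset.sum_add_distrib]
    refine Finset.sum_congr rfl fun k _ => ?_
    rw [← Finset.mul_sum, H3]
    field_simp
  have hcs : ∑ i, t i m m ^ 2 / (l i * l m) ≤ ∑ i, ∑ j, t m i j ^ 2 / (l i * l j) := by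
    refine Finset.sum_le_sum fun i _ => ?_
    have : t i m m ^ 2 / (l i * l m) = t m i m ^ 2 / (l i * l m) := by rw [t12 i m m]
    rw [this]
    exact Finset.single_le_sum (f := fun j => t m i j ^ 2 / (l i * l j))
      (fun j _ => div_nonneg (sq_nonneg _) (mul_pos (hl i) (hl j)).le) (Finset.mem_univ m)
  have hsum : ∑ i, (q m i / l i / l m - t i m m ^ 2 / (l i * l m) / l m +
      B * (l i + (∑ k, ζ k * t i i k) / l i - (Y + 2 * (vk i ^ 2 / l i) + 2 * (yk i * vk i)
        + 2 * V) / R ^ 2) - a * (1 / V - (vk i ^ 2 / l i) / V ^ 2)) ≤ 0 := by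
    refine Finset.sum_nonpos fun i _ => ?_
    have h := H2 i
    have hli := hl i
    have h' := div_nonpos_of_nonpos_of_nonneg h hli.le
    refine le_of_eq_of_le ?_ h'
    rw [qs m i]
    field_simp
    ring
  have hsum2 : (∑ i, q m i / l i) / l m - (∑ i, t i m m ^ 2 / (l i * l m)) / l m +
      B * (∑ i, l i + ∑ i, (∑ k, ζ k * t i i k) / l i - (n * Y + 2 * D + 2 * Y
        + 2 * n * V) / R ^ 2) - a * (n / V - D / V ^ 2) ≤ 0 := by
    refine le_of_eq_of_le ?_ hsum
    simp only [Finset.sum_add_distrib, Finset.sum_sub_distrib, ← Finset.mul_sum, ← Finset.sum_div,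
      Finset.sum_const, Finset.card_univ, Fintype.card_fin, nsmul_eq_mul, ← hD, ← hY]
    ring
  have hq : (∑ i, q m i / l i) / l m - (∑ i, t i m m ^ 2 / (l i * l m)) / l m ≥
      (g2 + α * (l m / V - vk m ^ 2 / V ^ 2) + β * (2 * (l m ^ 2 + ∑ k, Z k * t m m k
        + l m ^ 2 * yk m ^ 2 + w * l m) / ρ - (2 * l m * Z m) ^ 2 / ρ ^ 2)) / l m := by
    rw [← H4, ← sub_div]
    exact div_le_div_of_nonneg_right (by linarith) hlm.le
  rw [h3] at hsum2
  rw [hZt] at hq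
  have hDterm : 0 ≤ a * (D / V ^ 2) - B * (2 * D / R ^ 2) := by
    have : a * (D / V ^ 2) - B * (2 * D / R ^ 2) = D * (a * R ^ 2 - 2 * B * V ^ 2) / (V ^ 2 * R ^ 2) := by
      field_simp
    rw [this]
    exact div_nonneg (mul_nonneg hD0 (by linarith)) (by positivity)
  have hfin : (g2 + α * (l m / V - vk m ^ 2 / V ^ 2) + β * (2 * (l m ^ 2 + l m * (- B * X + B * (Y + V) / R ^ 2 * S1 + a * S1 / V)
        + l m ^ 2 * yk m ^ 2 + w * l m) / ρ - (2 * l m * Z m) ^ 2 / ρ ^ 2)) / l m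
      = g2 / l m + α * (1 / V - vk m ^ 2 / (V ^ 2 * l m)) +
      β * (2 * (l m * (1 + yk m ^ 2) + w) / ρ - 4 * l m * Z m ^ 2 / ρ ^ 2)
      + 2 * β / ρ * (B * (Y + V) / R ^ 2 * S1 + a * S1 / V) - B * (2 * β / ρ * X) := by
    field_simp
    ring
  rw [hfin] at hq
  have hexp : B * (∑ i, l i + (∑ k, ζ k * (g1 k + α * (vk k / V)) + 2 * β / ρ * X) -
      (n * Y + 2 * D + 2 * Y + 2 * n * V) / R ^ 2) - a * (n / V - D / V ^ 2) =
      B * (∑ i, l i + ∑ k, ζ k * (g1 k + α * (vk k / V)) - (n * Y + 2 * Y + 2 * n * V) / R ^ 2)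
      - a * n / V + B * (2 * β / ρ * X) + (a * (D / V ^ 2) - B * (2 * D / R ^ 2)) := by
    ring
  linarith



theorem ab_mul {x y A B : ℝ} (hx : |x| ≤ A) (hy : |y| ≤ B) : |x * y| ≤ A * B := by
  rw [abs_mul]; exact mul_le_mul hx hy (abs_nonneg _) ((abs_nonneg _).trans hx)

theorem ab_add {x y A B : ℝ} (hx : |x| ≤ A) (hy : |y| ≤ B) : |x + y| ≤ A + B :=
  (abs_add_le x y).trans (add_le_add hx hy)

theorem ab_sub {x y A B : ℝ} (hx : |x| ≤ A) (hy : |y| ≤ B) : |x - y| ≤ A + B :=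
  (abs_sub x y).trans (add_le_add hx hy)

theorem ab_sq {x A : ℝ} (hx : |x| ≤ A) : |x ^ 2| ≤ A ^ 2 := by
  rw [abs_pow]; exact pow_le_pow_left₀ (abs_nonneg _) hx 2

theorem ab_sum {n : ℕ} {x : Fin n → ℝ} {A N : ℝ} (hx : ∀ i, |x i| ≤ A) (hn : (n:ℝ) ≤ N) (hA : 0 ≤ A) :
    |∑ i, x i| ≤ N * A := by
  refine (Finset.abs_sum_le_sum_abs _ _).trans ?_
  refine (Finset.sum_le_sum fun i _ => hx i).trans ?_
  simp only [Finset.sum_const, Finset.card_univ, Fintype.card_fin, nsmul_eq_mul]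
  exact mul_le_mul_of_nonneg_right hn hA

def Bc (N : ℝ) : ℝ := 2 * N ^ 2 * (1 + N ^ 2) + 4 * N ^ 5 + 1
def ac (N : ℝ) : ℝ := 2 * Bc N * N ^ 3
def Cint (N : ℝ) : ℝ := N + N * (N + N ^ 4) + 2 * N ^ 3 +
  2 * N * N * (Bc N * (2 * N) * N * (N * N ^ 2) + ac N * (N * N ^ 2) * N) +
  Bc N * (N * (N * (N + N * (N * N))) + (N * N + 2 * N + 2 * N * N) * N) + ac N * N * N

theorem interior_num {n : ℕ} (vk yk l ζ Z g1 : Fin n → ℝ)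
    (V R α β ρ w Y g2 N : ℝ) (m : Fin n) (hN : 1 ≤ N)
    (hl : ∀ i, 0 < l i) (hl1 : 1 ≤ l m) (hV : 0 < V) (hR : 0 < R) (hρ : 0 < ρ)
    (n1 : |1 / V| ≤ N) (n2 : |V| ≤ N) (n3 : |1 / ρ| ≤ N) (n4 : ∀ k, |vk k| ≤ N)
    (n5 : ∀ k, |yk k| ≤ N) (n6 : |w| ≤ N) (n7 : |Y| ≤ N) (n8 : ∀ k, |g1 k| ≤ N) (n9 : |g2| ≤ N)
    (n10 : |α| ≤ N) (n11 : |β| ≤ N) (n12 : ∀ k, |ζ k| ≤ N) (n13 : ∀ k, |Z k| ≤ N)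
    (n14 : |1 / R ^ 2| ≤ N) (n15 : (n:ℝ) ≤ N)
    (H : g2 / l m + α * (1 / V - vk m ^ 2 / (V ^ 2 * l m)) +
      β * (2 * (l m * (1 + yk m ^ 2) + w) / ρ - 4 * l m * Z m ^ 2 / ρ ^ 2)
      + 2 * β / ρ * (Bc N * (Y + V) / R ^ 2 * (∑ k, vk k * Z k) + ac N * (∑ k, vk k * Z k) / V)
      + Bc N * (∑ i, l i + ∑ k, ζ k * (g1 k + α * (vk k / V)) - (n * Y + 2 * Y + 2 * n * V) / R ^ 2)
      - ac N * n / V ≤ 0) : l m ≤ Cint N := by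
  have hN0 : 0 ≤ N := by linarith
  have hB : 0 < Bc N := by unfold Bc; positivity
  have ha : 0 ≤ ac N := by unfold ac; positivity
  have aB : |Bc N| ≤ Bc N := (abs_of_pos hB).le
  have aa : |ac N| ≤ ac N := (abs_of_nonneg ha).le
  have an : |(n:ℝ)| ≤ N := by rwa [abs_of_nonneg (Nat.cast_nonneg n)]
  have a2 : |(2:ℝ)| ≤ 2 := by norm_num
  have a1 : |(1:ℝ)| ≤ 1 := by norm_num
  have a4 : |(4:ℝ)| ≤ 4 := by norm_num
  have hlm := hl m
  have hinv : |1 / l m| ≤ 1 := by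
    rw [abs_of_pos (by positivity)]; rw [div_le_one hlm]; exact hl1
  have hsum : l m ≤ ∑ i, l i := Finset.single_le_sum (fun i _ => (hl i).le) (Finset.mem_univ m)
  have T1 : |g2 * (1 / l m)| ≤ N * 1 := ab_mul n9 hinv
  have T2 : |α * (1 / V - vk m ^ 2 * ((1 / V) ^ 2 * (1 / l m)))| ≤ N * (N + N ^ 2 * (N ^ 2 * 1)) :=
    ab_mul n10 (ab_sub n1 (ab_mul (ab_sq (n4 m)) (ab_mul (ab_sq n1) hinv)))
  have T3 : |β * (2 * (1 + yk m ^ 2) * (1 / ρ) - 4 * Z m ^ 2 * (1 / ρ) ^ 2)| ≤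
      N * (2 * (1 + N ^ 2) * N + 4 * N ^ 2 * N ^ 2) :=
    ab_mul n11 (ab_sub (ab_mul (ab_mul a2 (ab_add a1 (ab_sq (n5 m)))) n3)
      (ab_mul (ab_mul a4 (ab_sq (n13 m))) (ab_sq n3)))
  have T3' : |2 * β * w * (1 / ρ)| ≤ 2 * N * N * N := ab_mul (ab_mul (ab_mul a2 n11) n6) n3
  have S : |∑ k, vk k * Z k| ≤ N * N ^ 2 := by
    rw [sq]
    exact ab_sum (fun k => ab_mul (n4 k) (n13 k)) n15 (by positivity)
  have T4 : |2 * β * (1 / ρ) * (Bc N * (Y + V) * (1 / R ^ 2) * (∑ k, vk k * Z k) +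
      ac N * (∑ k, vk k * Z k) * (1 / V))| ≤ 2 * N * N * (Bc N * (N + N) * N * (N * N ^ 2) +
      ac N * (N * N ^ 2) * N) :=
    ab_mul (ab_mul (ab_mul a2 n11) n3) (ab_add (ab_mul (ab_mul (ab_mul aB (ab_add n7 n2)) n14) S)
      (ab_mul (ab_mul aa S) n1))
  have T5 : |∑ k, ζ k * (g1 k + α * (vk k / V))| ≤ N * (N * (N + N * (N * N))) := by
    refine ab_sum (fun k => ?_) n15 (by positivity)
    have : vk k / V = vk k * (1 / V) := by ring
    rw [this]
    exact ab_mul (n12 k) (ab_add (n8 k) (ab_mul n10 (ab_mul (n4 k) n1)))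
  have T6 : |(n * Y + 2 * Y + 2 * n * V) * (1 / R ^ 2)| ≤ (N * N + 2 * N + 2 * N * N) * N :=
    ab_mul (ab_add (ab_add (ab_mul an n7) (ab_mul a2 n7)) (ab_mul (ab_mul a2 an) n2)) n14
  have T7 : |ac N * n * (1 / V)| ≤ ac N * N * N := ab_mul (ab_mul aa an) n1
  have T3l := mul_le_mul_of_nonneg_left (neg_le_of_abs_le T3) hlm.le
  have T5l := mul_le_mul_of_nonneg_left (add_le_add (neg_le_of_abs_le T5)
    (neg_le_neg (le_of_abs_le T6))) hB.le
  have hBs := mul_le_mul_of_nonneg_left hsum hB.le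
  have e : g2 / l m + α * (1 / V - vk m ^ 2 / (V ^ 2 * l m)) +
      β * (2 * (l m * (1 + yk m ^ 2) + w) / ρ - 4 * l m * Z m ^ 2 / ρ ^ 2)
      + 2 * β / ρ * (Bc N * (Y + V) / R ^ 2 * (∑ k, vk k * Z k) + ac N * (∑ k, vk k * Z k) / V)
      + Bc N * (∑ i, l i + ∑ k, ζ k * (g1 k + α * (vk k / V)) - (n * Y + 2 * Y + 2 * n * V) / R ^ 2)
      - ac N * n / V = 
      g2 * (1 / l m) + α * (1 / V - vk m ^ 2 * ((1 / V) ^ 2 * (1 / l m))) +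
      l m * (β * (2 * (1 + yk m ^ 2) * (1 / ρ) - 4 * Z m ^ 2 * (1 / ρ) ^ 2)) + 2 * β * w * (1 / ρ)
      + 2 * β * (1 / ρ) * (Bc N * (Y + V) * (1 / R ^ 2) * (∑ k, vk k * Z k) +
      ac N * (∑ k, vk k * Z k) * (1 / V)) + Bc N * (∑ i, l i) + 
      Bc N * ((∑ k, ζ k * (g1 k + α * (vk k / V))) + -((n * Y + 2 * Y + 2 * n * V) * (1 / R ^ 2)))
      - ac N * n * (1 / V) := by
    field_simp
    ring
  rw [e] at H
  have hb : l m * (Bc N) = l m * (N * (2 * (1 + N ^ 2) * N + 4 * N ^ 2 * N ^ 2)) + l m := by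
    unfold Bc; ring
  unfold Cint
  have := neg_le_of_abs_le T1
  have := neg_le_of_abs_le T2
  have := neg_le_of_abs_le T3'
  have := neg_le_of_abs_le T4
  have := le_of_abs_le T7
  linarith



structure FlatSol {E : Type*} [NormedAddCommGroup E] [InnerProductSpace ℝ E]
    (n : ℕ) (R N α β : ℝ) (v F : E → ℝ) : Prop where
  hN : 1 ≤ N
  hR : 0 < R
  hv : ContDiff ℝ (⊤ : ℕ∞) v
  hF : ContDiff ℝ (⊤ : ℕ∞) F
  conv : ∀ y, ‖y‖ ≤ R → ∀ e, e ≠ 0 → 0 < dd e (dd e v) y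
  bd : ∀ y, ‖y‖ = R → dd y v y = v y
  eq : ∀ y, ‖y‖ ≤ R → ∀ b : OrthonormalBasis (Fin n) ℝ E,
    Real.log (Matrix.of fun i j => dd (b i) (dd (b j) v) y).det =
      Real.log (F y) + α * Real.log (v y) + β * Real.log (rhof v y)
  v0 : ∀ y, ‖y‖ ≤ R → 0 < v y
  v1 : ∀ y, ‖y‖ ≤ R → 1 / v y ≤ N
  v2 : ∀ y, ‖y‖ ≤ R → v y ≤ N
  r0 : ∀ y, ‖y‖ ≤ R → 0 < rhof v y
  r1 : ∀ y, ‖y‖ ≤ R → 1 / rhof v y ≤ N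
  g1 : ∀ y, ‖y‖ ≤ R → ∀ e, ‖e‖ = 1 → |dd e v y| ≤ N
  w1 : ∀ y, ‖y‖ ≤ R → |wf v y| ≤ N
  Y1 : ∀ y, ‖y‖ ≤ R → |dd y v y| ≤ N
  F0 : ∀ y, ‖y‖ ≤ R → 0 < F y
  F1 : ∀ y, ‖y‖ ≤ R → 1 / F y ≤ N
  F2 : ∀ y, ‖y‖ ≤ R → F y ≤ N
  F3 : ∀ y, ‖y‖ ≤ R → ∀ e, ‖e‖ = 1 → |dd e F y| ≤ N
  F4 : ∀ y, ‖y‖ ≤ R → ∀ e, ‖e‖ = 1 → |dd e (dd e F) y| ≤ N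
  R1 : R ≤ N
  R2 : 1 / R ^ 2 ≤ N
  n1 : (n : ℝ) ≤ N
  al : |α| ≤ N
  be : |β| ≤ N

section flat
variable {E : Type*} [NormedAddCommGroup E] [InnerProductSpace ℝ E]

def Nb (N : ℝ) : ℝ := N + N ^ 2 + N ^ 3 + N ^ 4

def Psi (R N : ℝ) (v : E → ℝ) (y e : E) : ℝ :=
  Real.log (dd e (dd e v) y) + Bc (Nb N) * Kf R v y - ac (Nb N) * Real.log (v y)

variable {n : ℕ} {R N α β : ℝ} {v F : E → ℝ}

theorem Nb_le (h : 1 ≤ N) : N ≤ Nb N ∧ 1 ≤ Nb N ∧ N ^ 2 ≤ Nb N ∧ N + N ^ 2 ≤ Nb N ∧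
    N + N ^ 3 ≤ Nb N ∧ N ^ 2 + N ^ 4 ≤ Nb N := by
  have h0 : 0 < N := by linarith
  have : 0 < N ^ 2 := by positivity
  have : 0 < N ^ 3 := by positivity
  have : 0 < N ^ 4 := by positivity
  unfold Nb
  refine ⟨?_, ?_, ?_, ?_, ?_, ?_⟩ <;> linarith

theorem inner_le (b : OrthonormalBasis (Fin n) ℝ E) (k : Fin n) (y : E) : |⟪b k, y⟫| ≤ ‖y‖ := by
  have := abs_real_inner_le_norm (b k) y
  rwa [b.norm_eq_one, one_mul] at this

theorem FlatSol.lpos (H : FlatSol n R N α β v F) (b : OrthonormalBasis (Fin n) ℝ E) {l : Fin n → ℝ}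
    {y0 : E} (hy : ‖y0‖ ≤ R) (hl : ∀ i a, dd a (dd (b i) v) y0 = l i * ⟪b i, a⟫) (i : Fin n) :
    0 < l i := by
  have := H.conv y0 hy (b i) (b.orthonormal.ne_zero i)
  rwa [hl, binner, if_pos rfl, mul_one] at this

theorem FlatSol.rhs_jet (H : FlatSol n R N α β v F) (b : OrthonormalBasis (Fin n) ℝ E) {l : Fin n → ℝ}
    {y0 : E} (hy : ‖y0‖ ≤ R) (hl : ∀ i a, dd a (dd (b i) v) y0 = l i * ⟪b i, a⟫) (k : Fin n) :
    J2 (fun s : ℝ => Real.log (F (y0 + s • b k)) + α * Real.log (v (y0 + s • b k)) +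
        β * Real.log (rhof v (y0 + s • b k)))
      (Real.log (F y0) + α * Real.log (v y0) + β * Real.log (rhof v y0))
      (dd (b k) F y0 / F y0 + α * (dd (b k) v y0 / v y0) +
        β * (2 * l k * (dd (b k) v y0 + wf v y0 * ⟪b k, y0⟫) / rhof v y0))
      ((dd (b k) (dd (b k) F) y0 / F y0 - dd (b k) F y0 ^ 2 / F y0 ^ 2) +
        α * (l k / v y0 - dd (b k) v y0 ^ 2 / v y0 ^ 2) +
        β * (2 * (l k ^ 2 + ∑ j, (dd (b j) v y0 + wf v y0 * ⟪b j, y0⟫) * t3 b v y0 k k j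
          + l k ^ 2 * ⟪b k, y0⟫ ^ 2 + wf v y0 * l k) / rhof v y0 -
          (2 * l k * (dd (b k) v y0 + wf v y0 * ⟪b k, y0⟫)) ^ 2 / rhof v y0 ^ 2)) :=
  (((dd_jet H.hF y0 (b k)).log (H.F0 y0 hy)).add
    (((jet_v b H.hv hl k).log (H.v0 y0 hy)).const_mul α)).add
    (((jet_rho b H.hv hl k).log (H.r0 y0 hy)).const_mul β)

theorem ball_ev {y0 : E} (hy : ‖y0‖ < R) (e : E) : ∀ᶠ s in nhds (0:ℝ), ‖y0 + s • e‖ ≤ R := by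
  have hc : Continuous fun s : ℝ => ‖y0 + s • e‖ := by fun_prop
  have := hc.continuousAt (x := 0)
  have h2 := this.eventually_lt (g := fun _ => R) continuousAt_const (by simpa using hy)
  exact h2.mono fun s hs => hs.le

theorem ab_inv {x N : ℝ} (h : 0 < x) (h1 : 1 / x ≤ N) : |1 / x| ≤ N := by
  rwa [abs_of_pos (by positivity)]

theorem FlatSol.interior (H : FlatSol n R N α β v F) (b : OrthonormalBasis (Fin n) ℝ E) {l : Fin n → ℝ}
    {y0 : E} (hy' : ‖y0‖ < R) (hl : ∀ i a, dd a (dd (b i) v) y0 = l i * ⟪b i, a⟫) (m : Fin n)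
    (hmax : ∀ y, ‖y‖ ≤ R → Psi R N v y (b m) ≤ Psi R N v y0 (b m)) (h1 : 1 ≤ l m) :
    l m ≤ Cint (Nb N) := by
  have hy := hy'.le
  have hpos := H.lpos b hy hl
  have hv := H.hv
  have hN := H.hN
  have hN0 : 0 ≤ N := by linarith
  obtain ⟨b1, b2, b3, b4, b5, b6⟩ := Nb_le hN
  have hV := H.v0 y0 hy
  have hF0 := H.F0 y0 hy
  have hR := H.hR
  have hρ := H.r0 y0 hy
  have jets := fun i : Fin n => (((jet_vmm b hv hl i m).log (hpos m)).add
    ((jet_K b hv hl R i).const_mul (Bc (Nb N)))).sub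
    (((jet_v b hv hl i).log hV).const_mul (ac (Nb N)))
  have jmax : ∀ i, _ := fun i => (jets i).localMax (by
    filter_upwards [ball_ev hy' (b i)] with s hs
    have := hmax _ hs
    simpa [Psi] using this)
  have juniq : ∀ k, _ := fun k => (jet_logdet b hv hl hpos k).unique (H.rhs_jet b hy hl k) (by
    filter_upwards [ball_ev hy' (b k)] with s hs
    exact H.eq _ hs b)
  have i1 : |1 / v y0| ≤ N := ab_inv hV (H.v1 _ hy)
  have i2 : |v y0| ≤ N := by rw [abs_of_pos hV]; exact H.v2 _ hy
  have i3 : |1 / rhof v y0| ≤ N := ab_inv hρ (H.r1 _ hy)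
  have i4 : ∀ k, |dd (b k) v y0| ≤ N := fun k => H.g1 _ hy _ (b.norm_eq_one k)
  have i5 : ∀ k, |⟪b k, y0⟫| ≤ N := fun k => (inner_le b k y0).trans (hy.trans H.R1)
  have i6 := H.w1 _ hy
  have i7 := H.Y1 _ hy
  have i8 : |1 / F y0| ≤ N := ab_inv hF0 (H.F1 _ hy)
  have i9 : ∀ k, |dd (b k) F y0| ≤ N := fun k => H.F3 _ hy _ (b.norm_eq_one k)
  have i10 : |dd (b m) (dd (b m) F) y0| ≤ N := H.F4 _ hy _ (b.norm_eq_one m)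
  have i14 : |1 / R ^ 2| ≤ N := ab_inv (by positivity) H.R2
  refine interior_num (fun k => dd (b k) v y0) (fun k => ⟪b k, y0⟫) l
    (fun k => dd (b k) v y0 - v y0 / R ^ 2 * ⟪b k, y0⟫)
    (fun k => dd (b k) v y0 + wf v y0 * ⟪b k, y0⟫) (fun k => dd (b k) F y0 / F y0)
    (v y0) R α β (rhof v y0) (wf v y0) (dd y0 v y0)
    (dd (b m) (dd (b m) F) y0 / F y0 - dd (b m) F y0 ^ 2 / F y0 ^ 2) (Nb N) m b2 hpos h1 hV hR hρ
    (i1.trans b1) (i2.trans b1) (i3.trans b1) (fun k => (i4 k).trans b1) (fun k => (i5 k).trans b1)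
    (i6.trans b1) (i7.trans b1) ?_ ?_ (H.al.trans b1) (H.be.trans b1) ?_ ?_ (i14.trans b1)
    (H.n1.trans b1) ?_
  · intro k
    have := ab_mul (i9 k) i8
    rw [← sq, mul_one_div] at this
    exact this.trans b3
  · have := ab_sub (ab_mul i10 i8) (ab_mul (ab_sq (i9 m)) (ab_sq i8))
    refine le_trans (le_of_eq ?_) (this.trans (le_trans (le_of_eq ?_) b6))
    · congr 1; ring
    · ring
  · intro k
    have := ab_sub (i4 k) (ab_mul (ab_mul i2 i14) (i5 k))
    refine le_trans (le_of_eq ?_) (this.trans (le_trans (le_of_eq ?_) b5))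
    · congr 1; ring
    · ring
  · intro k
    have := ab_add (i4 k) (ab_mul i6 (i5 k))
    exact this.trans (le_trans (le_of_eq (by ring)) b4)
  · refine interior_algebra (fun k => dd (b k) v y0) (fun k => ⟪b k, y0⟫) l
      (fun k => dd (b k) v y0 - v y0 / R ^ 2 * ⟪b k, y0⟫)
      (fun k => dd (b k) v y0 + wf v y0 * ⟪b k, y0⟫) (fun k => dd (b k) F y0 / F y0)
      (t3 b v y0) (q4 b v y0) (v y0) R (Bc (Nb N)) (ac (Nb N)) α β (rhof v y0) (wf v y0) (dd y0 v y0)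
      (dd (b m) (dd (b m) F) y0 / F y0 - dd (b m) F y0 ^ 2 / F y0 ^ 2) m hpos hV hR hρ
      (by unfold Bc; positivity) ?_ (dd_self_eq b v y0) (t3_swap12 b hv) (t3_swap23 b hv)
      (q4_symm b hv) (fun k => ?_) (fun i => ?_) (fun k => ?_) ?_
    · have hBp : 0 ≤ Bc (Nb N) := by unfold Bc; positivity
      have e1 : v y0 ^ 2 ≤ (Nb N) ^ 2 := pow_le_pow_left₀ hV.le ((H.v2 _ hy).trans b1) 2
      have e2 : 1 ≤ Nb N * R ^ 2 := by
        have := H.R2.trans b1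
        rwa [div_le_iff₀ (by positivity)] at this
      have e3 : (Nb N) ^ 2 ≤ (Nb N) ^ 3 * R ^ 2 := by
        have := mul_le_mul_of_nonneg_left e2 (sq_nonneg (Nb N))
        nlinarith
      unfold ac
      nlinarith
    · exact (jmax k).1
    · exact (jmax i).2
    · exact (juniq k).2.1
    · exact (juniq m).2.2
end flat

section flat
variable {E : Type*} [NormedAddCommGroup E] [InnerProductSpace ℝ E]

theorem ddd_eq {v : E → ℝ} (hv : ContDiff ℝ (⊤ : ℕ∞) v) (a b c y : E) :
    dd a (dd b (dd c v)) y = fderiv ℝ (fderiv ℝ (fderiv ℝ v)) y a b c := by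
  have hH : ContDiff ℝ (⊤ : ℕ∞) (fderiv ℝ (fderiv ℝ v)) :=
    (fderiv_contDiff hv).fderiv_right (by exact_mod_cast le_top)
  have h1 : DifferentiableAt ℝ (fderiv ℝ (fderiv ℝ v)) y := smooth_diff hH y
  have e : dd b (dd c v) = fun y => fderiv ℝ (fderiv ℝ v) y b c := by
    funext y; exact dd_dd hv b c y
  rw [e]
  unfold dd
  have h2 : HasFDerivAt (fun y => fderiv ℝ (fderiv ℝ v) y b c) _ y :=
    (h1.hasFDerivAt.clm_apply (hasFDerivAt_const b y)).clm_apply (hasFDerivAt_const c y)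
  rw [h2.fderiv]
  simp

theorem wf_hasFDerivAt {v : E → ℝ} (hv : ContDiff ℝ (⊤ : ℕ∞) v) (y : E) :
    HasFDerivAt (wf v) ((fderiv ℝ (fderiv ℝ v) y).flip y) y := by
  have h1 : HasFDerivAt (fun y => fderiv ℝ v y y) _ y :=
    ((smooth_diff (fderiv_contDiff hv) y).hasFDerivAt).clm_apply (hasFDerivAt_id y)
  have h2 := h1.sub (smooth_diff hv y).hasFDerivAt
  refine HasFDerivAt.congr_fderiv h2 ?_
  ext a
  simp

theorem bdry_deriv {R : ℝ} (hR : 0 < R) {v : E → ℝ} (hv : ContDiff ℝ (⊤ : ℕ∞) v)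
    (hb : ∀ y, ‖y‖ = R → dd y v y = v y) {y0 e : E} (hy : ‖y0‖ = R) (he : ‖e‖ = 1)
    (hye : ⟪y0, e⟫ = 0) :
    dd e (dd y0 v) y0 = 0 ∧
    dd y0 (dd e (dd e v)) y0 = dd y0 (dd y0 v) y0 / R ^ 2 - dd e (dd e v) y0 := by
  set γ : ℝ → E := fun φ => Real.cos φ • y0 + (R * Real.sin φ) • e with hγ
  set γ' : ℝ → E := fun φ => (-Real.sin φ) • y0 + (R * Real.cos φ) • e with hγ'
  have d1 : ∀ φ, HasDerivAt γ (γ' φ) φ := fun φ =>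
    ((Real.hasDerivAt_cos φ).smul_const y0).add (((Real.hasDerivAt_sin φ).const_mul R).smul_const e)
  have d2 : HasDerivAt γ' (-y0) 0 := by
    have := (((Real.hasDerivAt_sin 0).neg).smul_const y0).add
      (((Real.hasDerivAt_cos 0).const_mul R).smul_const e)
    refine HasDerivAt.congr_deriv this ?_
    simp
  have nγ : ∀ φ, ‖γ φ‖ = R := by
    intro φ
    have : ‖γ φ‖ ^ 2 = R ^ 2 := by
      rw [hγ]
      simp only
      rw [norm_add_sq_real, norm_smul, norm_smul, inner_smul_left, inner_smul_right, hye, hy, he]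
      simp only [mul_zero, add_zero, mul_one, mul_pow, Real.norm_eq_abs, sq_abs]
      have := Real.sin_sq_add_cos_sq φ
      nlinarith
    exact (pow_left_inj₀ (norm_nonneg _) hR.le two_ne_zero).mp this
  have w0 : ∀ φ, wf v (γ φ) = 0 := fun φ => by
    unfold wf; rw [hb _ (nγ φ), sub_self]
  have g0 : ∀ φ, fderiv ℝ (fderiv ℝ v) (γ φ) (γ' φ) (γ φ) = 0 := by
    intro φ
    have h1 := (wf_hasFDerivAt hv (γ φ)).comp_hasDerivAt φ (d1 φ)
    have h2 : HasDerivAt (wf v ∘ γ) 0 φ := by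
      have : wf v ∘ γ = fun _ => 0 := by funext φ; exact w0 φ
      rw [this]; exact hasDerivAt_const _ _
    simpa using h1.unique h2
  have γ0 : γ 0 = y0 := by simp [hγ]
  have γ'0 : γ' 0 = R • e := by simp [hγ']
  have hH : ContDiff ℝ (⊤ : ℕ∞) (fderiv ℝ (fderiv ℝ v)) :=
    (fderiv_contDiff hv).fderiv_right (by exact_mod_cast le_top)
  constructor
  · have := g0 0
    rw [γ0, γ'0] at this
    rw [dd_dd hv]
    simp only [map_smul, smul_apply, smul_eq_mul] at this
    exact (mul_eq_zero.mp this).resolve_left hR.ne'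
  · have h1 := ((((smooth_diff hH (γ 0)).hasFDerivAt).comp_hasDerivAt (0:ℝ) (d1 0)).clm_apply d2).clm_apply
      (d1 0)
    have h2 : HasDerivAt (fun φ => fderiv ℝ (fderiv ℝ v) (γ φ) (γ' φ) (γ φ)) 0 0 := by
      have : (fun φ => fderiv ℝ (fderiv ℝ v) (γ φ) (γ' φ) (γ φ)) = fun _ => 0 := by
        funext φ; exact g0 φ
      rw [this]; exact hasDerivAt_const _ _
    have h3 := h1.unique h2
    simp only [γ0, γ'0, map_smul, map_neg, smul_apply, smul_eq_mul, Function.comp,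
      add_apply, neg_apply] at h3
    rw [← ddd_eq hv, ← dd_dd hv, ← dd_dd hv] at h3
    have e1 : dd e (dd e (dd y0 v)) y0 = dd y0 (dd e (dd e v)) y0 := by
      rw [dd_comm hv e y0, dd_comm (dd_contDiff hv e) e y0]
    rw [e1] at h3
    field_simp
    nlinarith

theorem one_side {φ ψ : ℝ → ℝ} {a b : ℝ} (h1 : HasDerivAt φ a 0) (h2 : HasDerivAt ψ b 0)
    (h : ∀ s, 0 ≤ s → s ≤ 1 → φ s = ψ s) : a = b := by
  have k1 := (h1.hasDerivWithinAt (s := Icc 0 1))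
  have k2 := (h2.hasDerivWithinAt (s := Icc 0 1))
  have k3 : HasDerivWithinAt φ b (Icc 0 1) 0 :=
    k2.congr (fun s hs => h s hs.1 hs.2) (h 0 le_rfl zero_le_one)
  exact (uniqueDiffOn_Icc (zero_lt_one) 0 (by simp)).eq_deriv _ k1 k3

theorem one_side_max {φ : ℝ → ℝ} {a : ℝ} (h1 : HasDerivAt φ a 0)
    (h : ∀ s, 0 ≤ s → s ≤ 1 → φ s ≤ φ 0) : a ≤ 0 := by
  have k : Filter.Tendsto (slope φ 0) (nhdsWithin 0 (Ioi 0)) (nhds a) :=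
    (hasDerivAt_iff_tendsto_slope.mp h1).mono_left (nhdsWithin_mono _ (fun x hx => ne_of_gt hx))
  refine le_of_tendsto k ?_
  have : Ioc (0:ℝ) 1 ∈ nhdsWithin (0:ℝ) (Ioi 0) := Ioc_mem_nhdsGT zero_lt_one
  filter_upwards [this] with s hs
  rw [slope_def_field]
  exact div_nonpos_of_nonpos_of_nonneg (by linarith [h s hs.1.le hs.2]) (by linarith [hs.1])

variable {n : ℕ} {R N α β : ℝ} {v F : E → ℝ}

theorem Kf_contDiff (b : OrthonormalBasis (Fin n) ℝ E) (hv : ContDiff ℝ (⊤ : ℕ∞) v) :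
    ContDiff ℝ (⊤ : ℕ∞) (Kf R v) := by
  have e : Kf R v = fun y => 1 / 2 * (∑ k, dd (b k) v y * dd (b k) v y) -
      1 / R ^ 2 * (v y * fderiv ℝ v y y) := by
    funext y; unfold Kf; rw [gsq_eq b]; rfl
  rw [e]
  have h2 : ContDiff ℝ (⊤ : ℕ∞) (fun y => fderiv ℝ v y y) := (fderiv_contDiff hv).clm_apply contDiff_id
  have h1 : ContDiff ℝ (⊤ : ℕ∞) (fun y => ∑ k, dd (b k) v y * dd (b k) v y) :=
    ContDiff.sum fun k _ => (dd_contDiff hv (b k)).mul (dd_contDiff hv (b k))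
  exact (contDiff_const.mul h1).sub (contDiff_const.mul (hv.mul h2))

/-- radial derivative of K at the boundary -/
theorem Kf_radial (hR : 0 < R) (b : OrthonormalBasis (Fin n) ℝ E) (hv : ContDiff ℝ (⊤ : ℕ∞) v)
    {l : Fin n → ℝ} {y0 : E} (hl : ∀ i a, dd a (dd (b i) v) y0 = l i * ⟪b i, a⟫)
    (hy : ‖y0‖ = R) (hb : dd y0 v y0 = v y0) {c : ℝ} (hc : ∀ a, dd a (dd y0 v) y0 = c * ⟪a, y0⟫) :
    dd y0 (Kf R v) y0 = - 2 * v y0 ^ 2 / R ^ 2 := by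
  have hK : ∀ i, dd (b i) (Kf R v) y0 = _ := fun i => 
    ((dd_jet (Kf_contDiff (R := R) b hv) y0 (b i)).hasDerivAt).unique (jet_K b hv hl R i).hasDerivAt
  have hc' : ∀ i, l i * ⟪b i, y0⟫ = c * ⟪b i, y0⟫ := by
    intro i
    rw [← hl i y0, dd_comm hv, hc]
  have hyy : ∑ i, ⟪b i, y0⟫ ^ 2 = R ^ 2 := by
    rw [← hy, ← b.sum_sq_norm_inner_right]
    exact Finset.sum_congr rfl fun i _ => by simp
  rw [dd_sum b]
  have : ∀ i, ⟪b i, y0⟫ * dd (b i) (Kf R v) y0 = 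
      c * (⟪b i, y0⟫ * dd (b i) v y0) - c * v y0 / R ^ 2 * ⟪b i, y0⟫ ^ 2 - 
      2 * v y0 / R ^ 2 * (⟪b i, y0⟫ * dd (b i) v y0) := by
    intro i
    rw [hK, hb]
    have := hc' i
    linear_combination (dd (b i) v y0 - v y0 / R ^ 2 * ⟪b i, y0⟫) * this
  rw [Finset.sum_congr rfl fun i _ => this i, Finset.sum_sub_distrib, Finset.sum_sub_distrib,
    ← Finset.mul_sum, ← Finset.mul_sum, ← Finset.mul_sum, ← dd_self_eq b, hyy, hb]
  field_simp
  ring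

end flat

section flat
variable {E : Type*} [NormedAddCommGroup E] [InnerProductSpace ℝ E]
variable {n : ℕ} {R N α β : ℝ} {v F : E → ℝ}

def Ub (N : ℝ) : ℝ := N + N * N + N * (N * N ^ 2 + N ^ 2 + N)
def Qb (N : ℝ) : ℝ := 1 + N * (N * N + N * (N * N)) + N * (N * (2 * (N + N * N) * N))
def Cbd (N : ℝ) : ℝ := Real.exp (Ub N + N * Real.log (Qb N))

theorem log_ab {x A B : ℝ} (hx : 0 < x) (h1 : x ≤ A) (h2 : 1 / x ≤ A) (hB : A ≤ B): |Real.log x| ≤ B := by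
  rw [abs_le]
  have e1 := Real.log_le_self hx.le
  have e2 := Real.log_le_self (show 0 ≤ 1 / x by positivity)
  rw [one_div, Real.log_inv] at e2
  rw [one_div] at h2
  constructor <;> linarith

theorem FlatSol.gsq_le (H : FlatSol n R N α β v F) (b : OrthonormalBasis (Fin n) ℝ E) {y : E}
    (hy : ‖y‖ ≤ R) : gsq v y ≤ N * N ^ 2 := by
  rw [gsq_eq b, sq]
  exact (le_abs_self _).trans (ab_sum (fun k => ab_mul (H.g1 _ hy _ (b.norm_eq_one k))
    (H.g1 _ hy _ (b.norm_eq_one k))) H.n1 (mul_self_nonneg N))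

theorem FlatSol.rhs_le (H : FlatSol n R N α β v F) (b : OrthonormalBasis (Fin n) ℝ E) {y : E}
    (hy : ‖y‖ ≤ R) :
    Real.log (F y) + α * Real.log (v y) + β * Real.log (rhof v y) ≤ Ub N := by
  have hN := H.hN
  have hrho : rhof v y ≤ N * N ^ 2 + N ^ 2 := by
    unfold rhof
    exact add_le_add (H.gsq_le b hy) ((le_abs_self _).trans (ab_sq (H.w1 y hy)))
  have h1 : |Real.log (F y)| ≤ N := log_ab (H.F0 y hy) (H.F2 y hy) (H.F1 y hy) le_rfl
  have h2 : |Real.log (v y)| ≤ N := log_ab (H.v0 y hy) (H.v2 y hy) (H.v1 y hy) le_rfl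
  have h3 : |Real.log (rhof v y)| ≤ N * N ^ 2 + N ^ 2 + N :=
    log_ab (H.r0 y hy) (hrho.trans (by linarith)) ((H.r1 y hy).trans (by nlinarith [sq_nonneg N, mul_nonneg (by linarith : 0 ≤ N) (sq_nonneg N)])) le_rfl
  exact (le_abs_self _).trans (ab_add (ab_add h1 (ab_mul H.al h2)) (ab_mul H.be h3))

theorem FlatSol.boundary (H : FlatSol n R N α β v F) (b : OrthonormalBasis (Fin n) ℝ E) {l : Fin n → ℝ}
    {y0 : E} (hy' : ‖y0‖ = R) (hl : ∀ i a, dd a (dd (b i) v) y0 = l i * ⟪b i, a⟫) (m : Fin n)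
    (hlm : ∀ e, ‖e‖ = 1 → dd e (dd e v) y0 ≤ l m)
    (hmax : ∀ y, ‖y‖ ≤ R → ∀ e, ‖e‖ = 1 → Psi R N v y e ≤ Psi R N v y0 (b m)) (h1 : 1 ≤ l m) :
    l m ≤ Cbd N := by
  have hy := hy'.le
  have hpos := H.lpos b hy hl
  have hv := H.hv
  have hN := H.hN
  have hN0 : 0 ≤ N := by linarith
  have hV := H.v0 y0 hy
  have hF0 := H.F0 y0 hy
  have hR := H.hR
  have hρ := H.r0 y0 hy
  have hbd := H.bd y0 hy'
  obtain ⟨b1, b2, -⟩ := Nb_le hN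
  have hBp : 0 < Bc (Nb N) := by unfold Bc; positivity
  have hap : 0 ≤ ac (Nb N) := by unfold ac; positivity
  set c := dd y0 (dd y0 v) y0 / R ^ 2 with hcdef
  have hyy : ⟪y0, y0⟫ = R ^ 2 := by rw [real_inner_self_eq_norm_sq, hy']
  -- bilinearity
  have bil : ∀ a d, dd a (dd d v) y0 = fderiv ℝ (fderiv ℝ v) y0 a d := fun a d => dd_dd hv a d y0
  have tang : ∀ e, ⟪y0, e⟫ = 0 → dd e (dd y0 v) y0 = 0 := by
    intro e he
    by_cases h0 : e = 0
    · rw [h0, bil]; simp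
    · have hn : ‖e‖ ≠ 0 := norm_ne_zero_iff.mpr h0
      have := (bdry_deriv hR hv H.bd hy' (e := (‖e‖⁻¹) • e)
        (by rw [norm_smul, norm_inv, norm_norm, inv_mul_cancel₀ hn])
        (by rw [inner_smul_right, he, mul_zero])).1
      rw [bil] at this ⊢
      simp only [map_smul, smul_apply, smul_eq_mul] at this
      exact (mul_eq_zero.mp this).resolve_left (inv_ne_zero hn)
  have hc : ∀ a, dd a (dd y0 v) y0 = c * ⟪a, y0⟫ := by
    intro a
    have := tang (a - (⟪a, y0⟫ / R ^ 2) • y0) (by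
      rw [inner_sub_right, inner_smul_right, hyy, real_inner_comm]; field_simp; ring)
    rw [bil] at this ⊢
    simp only [map_sub, map_smul, sub_apply, smul_apply, smul_eq_mul] at this
    rw [hcdef, bil]
    have h2 : (fderiv ℝ (fderiv ℝ v) y0 a) y0 = ⟪a, y0⟫ / R ^ 2 * (fderiv ℝ (fderiv ℝ v) y0 y0) y0 := by
      linarith
    rw [h2]; ring
  have hcl : c ≤ l m := by
    have := hlm (R⁻¹ • y0) (by rw [norm_smul, hy', norm_inv, Real.norm_of_nonneg hR.le, inv_mul_cancel₀ hR.ne'])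
    rw [bil] at this
    simp only [map_smul, smul_apply, smul_eq_mul] at this
    rw [← bil] at this
    rw [hcdef]
    refine le_trans (le_of_eq ?_) this
    field_simp
  -- radial derivative
  have rad : ∀ e, ‖e‖ = 1 → dd e (dd e v) y0 = l m → 0 < dd y0 (dd e (dd e v)) y0 := by
    intro e he hel
    have j1 := (dd_jet (dd_contDiff (dd_contDiff hv e) e) y0 (-y0)).log (by rw [hel]; exact hpos m)
    have j2 := (dd_jet (Kf_contDiff (R := R) b hv) y0 (-y0)).const_mul (Bc (Nb N))
    have j3 := ((dd_jet hv y0 (-y0)).log hV).const_mul (ac (Nb N))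
    have j := ((j1.add j2).sub j3).hasDerivAt
    have hle := one_side_max j (by
      intro s hs0 hs1
      have hb : ‖y0 + s • -y0‖ ≤ R := by
        have : y0 + s • -y0 = (1 - s) • y0 := by module
        rw [this, norm_smul, hy', Real.norm_of_nonneg (by linarith)]
        nlinarith
      have h3 := hmax _ hb e he
      have h4 : Psi R N v y0 (b m) = Psi R N v y0 e := by
        unfold Psi; rw [hel, hl, binner, if_pos rfl, mul_one]
      rw [h4] at h3
      simpa [Psi] using h3)
    have neg : ∀ f : E → ℝ, dd (-y0) f y0 = - dd y0 f y0 := fun f => by simp [dd]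
    rw [neg, neg, neg, Kf_radial hR b hv hl hy' hbd hc, hbd, hel] at hle
    have e1 : 0 < Bc (Nb N) * (2 * v y0 ^ 2 / R ^ 2) := by positivity
    have e2 : -v y0 / v y0 = -1 := by field_simp
    rw [e2] at hle
    have : 0 < dd y0 (dd e (dd e v)) y0 / l m := by
      have e3 : -dd y0 (dd e (dd e v)) y0 / l m = - (dd y0 (dd e (dd e v)) y0 / l m) := by ring
      have e4 : Bc (Nb N) * -(-2 * v y0 ^ 2 / R ^ 2) = Bc (Nb N) * (2 * v y0 ^ 2 / R ^ 2) := by ring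
      rw [e3, e4] at hle
      linarith
    exact (div_pos_iff_of_pos_right (hpos m)).mp this
  have notan : ∀ e, ‖e‖ = 1 → ⟪y0, e⟫ = 0 → dd e (dd e v) y0 = l m → False := by
    intro e he hye hel
    have h3 := rad e he hel
    rw [(bdry_deriv hR hv H.bd hy' he hye).2, hel] at h3
    linarith
  have hci : ∀ i, l i * ⟪b i, y0⟫ = c * ⟪b i, y0⟫ := by
    intro i
    rw [← hl i y0, dd_comm hv, hc]
  have perp : ∀ i, i ≠ m → ⟪b i, y0⟫ = 0 := by
    intro i hi
    by_contra hne
    have hlc : l i = c := mul_right_cancel₀ hne (hci i)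
    -- then the m-th is also c
    set e := ⟪b i, y0⟫ • b m - ⟪b m, y0⟫ • b i with he
    have hAe : ∀ d, dd d (dd e v) y0 = ⟪b i, y0⟫ * (l m * ⟪b m, d⟫) - ⟪b m, y0⟫ * (l i * ⟪b i, d⟫) := by
      intro d
      rw [bil, he]
      simp only [map_sub, map_smul, smul_eq_mul]
      rw [← bil, ← bil, hl, hl]
    have hee : ⟪e, e⟫ = ⟪b i, y0⟫ ^ 2 + ⟪b m, y0⟫ ^ 2 := by
      rw [he]
      simp only [inner_sub_left, inner_sub_right, inner_smul_left, inner_smul_right, binner, if_neg hi,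
        if_neg (Ne.symm hi)]
      simp; ring
    have hlmc : ⟪b m, y0⟫ = 0 ∨ l m = c := by
      by_cases h : ⟪b m, y0⟫ = 0
      · exact Or.inl h
      · exact Or.inr (mul_right_cancel₀ h (hci m))
    have hq : dd e (dd e v) y0 = l m * ⟪e, e⟫ := by
      rw [hAe, hee, he]
      simp only [inner_sub_right, inner_smul_right, binner, if_neg hi, if_neg (Ne.symm hi)]
      rcases hlmc with h | h
      · rw [h]; simp; ring
      · rw [h, hlc]; simp; ring
    have hpe : ⟪y0, e⟫ = 0 := by
      rw [he, inner_sub_right, inner_smul_right, inner_smul_right, real_inner_comm y0 (b m),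
        real_inner_comm y0 (b i)]
      ring
    have hn2 : 0 < ⟪e, e⟫ := by
      rw [hee]; have := sq_pos_of_ne_zero hne; positivity
    rw [real_inner_self_eq_norm_sq] at hn2 hq
    have hn0 : ‖e‖ ≠ 0 := by intro h; rw [h] at hn2; simp at hn2
    refine notan (‖e‖⁻¹ • e) (by rw [norm_smul, norm_inv, norm_norm, inv_mul_cancel₀ hn0])
      (by rw [inner_smul_right, hpe, mul_zero]) ?_
    rw [bil]
    simp only [map_smul, smul_apply, smul_eq_mul]
    rw [← bil, hq]
    field_simp
  set σ := ⟪b m, y0⟫ with hσ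
  have hy0 : y0 = σ • b m := by
    conv_lhs => rw [← b.sum_repr' y0]
    rw [Finset.sum_eq_single m]
    · intro i _ hi; rw [perp i hi, zero_smul]
    · simp
  have hσ0 : σ ≠ 0 := by
    intro h; rw [h, zero_smul] at hy0; rw [hy0, norm_zero] at hy'; linarith
  have hσR : |σ| ≤ N := by
    have := inner_le b m y0
    exact (this.trans hy).trans H.R1
  have hlc : l m = c := mul_right_cancel₀ hσ0 (hci m)
  -- equation
  have A1 : ∑ i, Real.log (l i) ≤ Ub N := by
    have e1 := (jet_logdet b hv hl hpos m).zero_eq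
    have e2 := H.eq y0 hy b
    simp only [zero_smul, add_zero] at e1
    rw [← e1, e2]
    exact H.rhs_le b hy
  have A2 : ∑ i, t3 b v y0 m i i / l i = dd (b m) F y0 / F y0 + α * (dd (b m) v y0 / v y0) +
        β * (2 * l m * (dd (b m) v y0 + wf v y0 * ⟪b m, y0⟫) / rhof v y0) := by
    have d1 : HasDerivAt (fun s : ℝ => -σ * s) (-σ) 0 := by
      simpa using (hasDerivAt_id (0:ℝ)).const_mul (-σ)
    have k1 := (jet_logdet b hv hl hpos m).hasDerivAt
    have k2 := (H.rhs_jet b hy hl m).hasDerivAt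
    rw [show (0:ℝ) = -σ * 0 by ring] at k1 k2
    have k1' := k1.comp (0:ℝ) d1
    have k2' := k2.comp (0:ℝ) d1
    have := one_side k1' k2' (by
      intro s hs0 hs1
      have hb : ‖y0 + (-σ * s) • b m‖ ≤ R := by
        have : y0 + (-σ * s) • b m = (1 - s) • y0 := by
          conv_lhs => rw [hy0]
          conv_rhs => rw [hy0]
          module
        rw [this, norm_smul, hy', Real.norm_of_nonneg (by linarith)]
        nlinarith
      exact H.eq _ hb b)
    exact mul_right_cancel₀ (neg_ne_zero.mpr hσ0) this
  have A3 : ∀ i, σ * t3 b v y0 m i i = dd y0 (dd (b i) (dd (b i) v)) y0 := by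
    intro i
    unfold t3
    rw [← dd_smul, ← hy0]
  have A4 : ∀ i, i ≠ m → σ * t3 b v y0 m i i = l m - l i := by
    intro i hi
    rw [A3, (bdry_deriv hR hv H.bd hy' (b.norm_eq_one i) (by rw [real_inner_comm]; exact perp i hi)).2, hlc, hl,
      binner, if_pos rfl, mul_one]
  have A5 : 0 ≤ σ * t3 b v y0 m m m := by
    rw [A3]
    refine (rad (b m) (b.norm_eq_one m) ?_).le
    rw [hl, binner, if_pos rfl, mul_one]
  have hli : ∀ i, l i ≤ l m := by
    intro i
    have := hlm (b i) (b.norm_eq_one i)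
    rwa [hl, binner, if_pos rfl, mul_one] at this
  have A6 : ∀ i, 0 ≤ σ * t3 b v y0 m i i / l i := by
    intro i
    by_cases hi : i = m
    · rw [hi]; exact div_nonneg A5 (hpos m).le
    · rw [A4 i hi]; exact div_nonneg (by linarith [hli i]) (hpos i).le
  -- bound of RHS
  have i1 : |1 / v y0| ≤ N := ab_inv hV (H.v1 _ hy)
  have i3 : |1 / rhof v y0| ≤ N := ab_inv hρ (H.r1 _ hy)
  have i4 : |dd (b m) v y0| ≤ N := H.g1 _ hy _ (b.norm_eq_one m)
  have i6 := H.w1 _ hy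
  have i8 : |1 / F y0| ≤ N := ab_inv hF0 (H.F1 _ hy)
  have i9 : |dd (b m) F y0| ≤ N := H.F3 _ hy _ (b.norm_eq_one m)
  have a2 : |(2:ℝ)| ≤ 2 := by norm_num
  have A7 : ∑ i, σ * t3 b v y0 m i i / l i ≤ N * (N * N + N * (N * N)) +
      N * (N * (2 * (N + N * N) * N)) * l m := by
    have e : ∑ i, σ * t3 b v y0 m i i / l i =
        σ * (dd (b m) F y0 * (1 / F y0) + α * (dd (b m) v y0 * (1 / v y0))) +
        σ * (β * (2 * (dd (b m) v y0 + wf v y0 * σ) * (1 / rhof v y0))) * l m := by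
      rw [Finset.sum_congr rfl fun i _ => mul_div_assoc _ _ _, ← Finset.mul_sum, A2, ← hσ]
      field_simp
    rw [e]
    refine (le_abs_self _).trans (ab_add (ab_mul hσR (ab_add (ab_mul i9 i8) (ab_mul H.al (ab_mul i4 i1)))) ?_)
    refine ab_mul (ab_mul hσR (ab_mul H.be (ab_mul (ab_mul a2 (ab_add i4 (ab_mul i6 hσR))) i3))) ?_
    rw [abs_of_pos (hpos m)]
  have hQ1 : 1 ≤ Qb N := by
    unfold Qb
    have : 0 ≤ N * (N * N + N * (N * N)) := by positivity
    have : 0 ≤ N * (N * (2 * (N + N * N) * N)) := by positivity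
    linarith
  have A8 : ∀ i, i ≠ m → 1 / l i ≤ Qb N := by
    intro i hi
    have h2 := (Finset.single_le_sum (f := fun i => σ * t3 b v y0 m i i / l i) (fun i _ => A6 i)
      (Finset.mem_univ i)).trans A7
    rw [A4 i hi] at h2
    have h3 : l m / l i ≤ Qb N * l m := by
      have e1 : (l m - l i) / l i = l m / l i - 1 := by
        have := hpos i; field_simp
      rw [e1] at h2
      have : 0 ≤ N * (N * N + N * (N * N)) := by positivity
      unfold Qb
      nlinarith
    have hlp := hpos m
    have : l m / l i = 1 / l i * l m := by ring
    rw [this] at h3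
    exact le_of_mul_le_mul_right h3 hlp
  have A9 : ∀ i, i ≠ m → - Real.log (Qb N) ≤ Real.log (l i) := by
    intro i hi
    have := Real.log_le_log (by have := hpos i; positivity) (A8 i hi)
    rw [one_div, Real.log_inv] at this
    linarith
  have hlogQ : 0 ≤ Real.log (Qb N) := Real.log_nonneg hQ1
  have A10 : Real.log (l m) ≤ Ub N + N * Real.log (Qb N) := by
    have e1 : ∑ i, Real.log (l i) = Real.log (l m) + ∑ i ∈ Finset.univ.erase m, Real.log (l i) :=
      (Finset.add_sum_erase _ _ (Finset.mem_univ m)).symm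
    have e2 : -(N * Real.log (Qb N)) ≤ ∑ i ∈ Finset.univ.erase m, Real.log (l i) := by
      have h3 := Finset.sum_le_sum (s := Finset.univ.erase m) (f := fun _ => - Real.log (Qb N))
        (g := fun i => Real.log (l i)) (fun i hi => A9 i (Finset.ne_of_mem_erase hi))
      refine le_trans ?_ h3
      simp only [Finset.sum_const, nsmul_eq_mul, mul_neg, neg_le_neg_iff]
      refine mul_le_mul_of_nonneg_right (le_trans ?_ H.n1) hlogQ
      have := Finset.card_erase_le (s := (Finset.univ : Finset (Fin n))) (a := m)
      simp only [Finset.card_univ, Fintype.card_fin] at this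
      exact_mod_cast this
    linarith
  unfold Cbd
  rw [← Real.log_le_iff_le_exp (hpos m)]
  exact A10
end flat

section flat
variable {E : Type*} [NormedAddCommGroup E] [InnerProductSpace ℝ E]
variable {n : ℕ} {R N α β : ℝ} {v F : E → ℝ}

def Cflat (N : ℝ) : ℝ := max 1 (max (Cint (Nb N)) (Cbd N)) *
  Real.exp (Bc (Nb N) * (2 * (1 / 2 * (N * N ^ 2) + N * (N * N))) + ac (Nb N) * (2 * N))

theorem FlatSol.Kf_ab (H : FlatSol n R N α β v F) (b : OrthonormalBasis (Fin n) ℝ E) {y : E}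
    (hy : ‖y‖ ≤ R) : |Kf R v y| ≤ 1 / 2 * (N * N ^ 2) + N * (N * N) := by
  have hR := H.hR
  unfold Kf
  refine ab_sub (ab_mul (by norm_num) ?_) (ab_mul (ab_inv (by positivity) H.R2) (ab_mul ?_ (H.Y1 y hy)))
  · rw [abs_of_nonneg (by unfold gsq; positivity)]; exact H.gsq_le b hy
  · rw [abs_of_pos (H.v0 y hy)]; exact H.v2 y hy

theorem FlatSol.main [FiniteDimensional ℝ E] (hn : Module.finrank ℝ E = n)
    (H : FlatSol n R N α β v F) {y e : E} (hy : ‖y‖ ≤ R) (he : ‖e‖ = 1) :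
    dd e (dd e v) y ≤ Cflat N := by
  have hv := H.hv
  have hN := H.hN
  have hne : ∀ e : E, ‖e‖ = 1 → e ≠ 0 := by
    intro e he h; rw [h, norm_zero] at he; exact zero_ne_one he
  obtain ⟨b', -, -⟩ := eigen_exists hn hv y
  have hHc : Continuous (fderiv ℝ (fderiv ℝ v)) :=
    ((fderiv_contDiff hv).fderiv_right (m := (⊤ : ℕ∞)) (by exact_mod_cast le_top)).continuous
  have hK : IsCompact (Metric.closedBall (0:E) R ×ˢ Metric.sphere (0:E) 1) :=
    (isCompact_closedBall 0 R).prod (isCompact_sphere 0 1)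
  have hcont : ContinuousOn (fun p : E × E => Psi R N v p.1 p.2)
      (Metric.closedBall (0:E) R ×ˢ Metric.sphere (0:E) 1) := by
    unfold Psi
    have c1 : Continuous fun p : E × E => dd p.2 (dd p.2 v) p.1 := by
      have : (fun p : E × E => dd p.2 (dd p.2 v) p.1) =
          fun p => fderiv ℝ (fderiv ℝ v) p.1 p.2 p.2 := by funext p; exact dd_dd hv _ _ _
      rw [this]
      exact ((hHc.comp continuous_fst).clm_apply continuous_snd).clm_apply continuous_snd
    have c2 : Continuous fun p : E × E => Kf R v p.1 :=
      (Kf_contDiff (R := R) b' hv).continuous.comp continuous_fst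
    have c3 : Continuous fun p : E × E => v p.1 := hv.continuous.comp continuous_fst
    refine ((c1.continuousOn.log ?_).add (continuousOn_const.mul c2.continuousOn)).sub
      (continuousOn_const.mul (c3.continuousOn.log ?_))
    · rintro ⟨z, d⟩ ⟨hz, hd⟩
      simp at hz hd
      exact (H.conv z hz d (hne d hd)).ne'
    · rintro ⟨z, d⟩ ⟨hz, hd⟩
      simp at hz hd
      exact (H.v0 z hz).ne'
  obtain ⟨⟨y0, e0⟩, ⟨hy0, he0⟩, hmax0⟩ := hK.exists_isMaxOn ⟨(y, e), by simpa using ⟨hy, he⟩⟩ hcont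
  simp at hy0 he0
  have hmax1 : ∀ z, ‖z‖ ≤ R → ∀ d, ‖d‖ = 1 → Psi R N v z d ≤ Psi R N v y0 e0 := by
    intro z hz d hd
    exact hmax0 (show (z, d) ∈ _ by simpa using ⟨hz, hd⟩)
  obtain ⟨b, l, hl⟩ := eigen_exists hn hv y0
  have hpos := H.lpos b hy0 hl
  have hne' : Nonempty (Fin n) := by
    by_contra hcon
    rw [not_nonempty_iff] at hcon
    have := b.sum_repr e
    simp at this
    exact hne e he this.symm
  obtain ⟨m, -, hm⟩ := Finset.exists_max_image (Finset.univ : Finset (Fin n)) l Finset.univ_nonempty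
  have hquad : ∀ d, dd d (dd d v) y0 = ∑ i, l i * ⟪b i, d⟫ ^ 2 := by
    intro d
    have : dd d (dd d v) y0 = dd d (dd d v) y0 := rfl
    rw [dd_sum b d (dd d v)]
    refine Finset.sum_congr rfl fun i _ => ?_
    rw [dd_comm hv, hl]; ring
  have hlm : ∀ d, ‖d‖ = 1 → dd d (dd d v) y0 ≤ l m := by
    intro d hd
    rw [hquad]
    refine (Finset.sum_le_sum fun i _ => mul_le_mul_of_nonneg_right (hm i (Finset.mem_univ i)) (sq_nonneg _)).trans ?_
    rw [← Finset.mul_sum]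
    have : ∑ i, ⟪b i, d⟫ ^ 2 = 1 := by
      have := b.sum_sq_norm_inner_right d
      rw [hd] at this
      simpa using this
    rw [this, mul_one]
  have hbm : dd (b m) (dd (b m) v) y0 = l m := by rw [hl, binner, if_pos rfl, mul_one]
  have hPsi : Psi R N v y0 e0 ≤ Psi R N v y0 (b m) := by
    unfold Psi
    have := Real.log_le_log (H.conv y0 hy0 e0 (hne e0 he0)) (hlm e0 he0)
    rw [hbm]; linarith
  have hmax : ∀ z, ‖z‖ ≤ R → ∀ d, ‖d‖ = 1 → Psi R N v z d ≤ Psi R N v y0 (b m) :=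
    fun z hz d hd => (hmax1 z hz d hd).trans hPsi
  have hlam : l m ≤ max 1 (max (Cint (Nb N)) (Cbd N)) := by
    by_cases h1 : 1 ≤ l m
    · refine le_max_of_le_right ?_
      rcases hy0.lt_or_eq with h | h
      · exact le_max_of_le_left (H.interior b h hl m (fun z hz => hmax z hz _ (b.norm_eq_one m)) h1)
      · exact le_max_of_le_right (H.boundary b h hl m hlm hmax h1)
    · exact le_max_of_le_left (le_of_not_ge h1)
  have hfin := hmax y hy e he
  unfold Psi at hfin
  rw [hbm] at hfin
  have k1 := neg_le_of_abs_le (H.Kf_ab b hy)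
  have k2 := le_of_abs_le (H.Kf_ab b hy0)
  have hB : 0 ≤ Bc (Nb N) := by have := (Nb_le hN).2.1; unfold Bc; positivity
  have ha : 0 ≤ ac (Nb N) := by have := (Nb_le hN).2.1; unfold ac; positivity
  have k3 := le_of_abs_le (log_ab (H.v0 y hy) (H.v2 y hy) (H.v1 y hy) le_rfl)
  have k4 := neg_le_of_abs_le (log_ab (H.v0 y0 hy0) (H.v2 y0 hy0) (H.v1 y0 hy0) le_rfl)
  have k5 := mul_le_mul_of_nonneg_left (add_le_add k2 (neg_le_neg k1)) hB
  have k6 := mul_le_mul_of_nonneg_left (add_le_add k3 (neg_le_neg k4)) ha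
  have hp := H.conv y hy e (hne e he)
  have hlog : Real.log (dd e (dd e v) y) ≤ Real.log (l m) + (Bc (Nb N) * (2 * (1 / 2 * (N * N ^ 2) + N * (N * N))) + ac (Nb N) * (2 * N)) := by
    linarith
  rw [Real.log_le_iff_le_exp hp, Real.exp_add, Real.exp_log (hpos m)] at hlog
  exact hlog.trans (mul_le_mul_of_nonneg_right hlam (Real.exp_nonneg _))

end flat


def nx (n : ℕ) (Z : Euc n) : Euc n := ‖Z‖⁻¹ • Z
def xiZ (n : ℕ) (θ : ℝ) (Z : Euc n) : Euc n := nx n Z + Real.cos θ • eVec n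
def uZ (n : ℕ) (θ : ℝ) (g : Euc n → ℝ) (Z : Euc n) : ℝ := ‖Z‖ * g (xiZ n θ Z)
def GrZ (n : ℕ) (θ : ℝ) (g : Euc n → ℝ) (Z : Euc n) : Euc n :=
  g (xiZ n θ Z) • nx n Z + sgrad n θ g (xiZ n θ Z)
def Qop (n : ℕ) (θ : ℝ) (g : Euc n → ℝ) (ξ : Euc n) : Euc n →L[ℝ] Euc n :=
  thessOp n θ g ξ + g ξ • tproj n θ ξ

section geo
variable {n : ℕ} {θ : ℝ} {g : Euc n → ℝ}

@[simp] theorem sphNormal_xiZ (Z : Euc n) : sphNormal n θ (xiZ n θ Z) = nx n Z := by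
  simp [sphNormal, xiZ]

theorem tproj_apply (ξ W : Euc n) :
    tproj n θ ξ W = W - ⟪sphNormal n θ ξ, W⟫ • sphNormal n θ ξ := by
  simp [tproj]

theorem nx_norm {Z : Euc n} (hZ : Z ≠ 0) : ‖nx n Z‖ = 1 := by
  have : ‖Z‖ ≠ 0 := norm_ne_zero_iff.mpr hZ
  simp [nx, norm_smul, this]

theorem hasFDerivAt_norm' {Z : Euc n} (hZ : Z ≠ 0) :
    HasFDerivAt (fun Z : Euc n => ‖Z‖) (innerSL ℝ (nx n Z)) Z := by
  have hz : ‖Z‖ ≠ 0 := norm_ne_zero_iff.mpr hZ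
  have h1 : HasFDerivAt (fun Z : Euc n => ‖Z‖ ^ 2) _ Z := (hasStrictFDerivAt_norm_sq Z).hasFDerivAt
  have h2 := h1.sqrt (by positivity)
  have : (fun Z : Euc n => Real.sqrt (‖Z‖ ^ 2)) = fun Z => ‖Z‖ := by
    funext Z; exact Real.sqrt_sq (norm_nonneg Z)
  rw [this, Real.sqrt_sq (norm_nonneg Z)] at h2
  refine h2.congr_fderiv ?_
  ext W
  simp [nx, inner_smul_left]
  field_simp

theorem hasFDerivAt_nx {Z : Euc n} (hZ : Z ≠ 0) :
    HasFDerivAt (nx n) (‖Z‖⁻¹ • tproj n θ (xiZ n θ Z)) Z := by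
  have hz : ‖Z‖ ≠ 0 := norm_ne_zero_iff.mpr hZ
  have h1 := ((hasDerivAt_inv hz).comp_hasFDerivAt Z (hasFDerivAt_norm' hZ)).smul (hasFDerivAt_id Z)
  refine HasFDerivAt.congr_fderiv h1 ?_
  ext1 W
  simp only [add_apply, smul_apply, tproj_apply, sphNormal_xiZ,
    ContinuousLinearMap.smulRight_apply, innerSL_apply_apply, nx, inner_smul_left, id,
    ContinuousLinearMap.id_apply, neg_apply, smul_sub, smul_smul, smul_eq_mul, RCLike.conj_to_real]
  rw [sub_eq_add_neg, ← neg_smul]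
  congr 2
  field_simp

theorem hasFDerivAt_xiZ {Z : Euc n} (hZ : Z ≠ 0) :
    HasFDerivAt (xiZ n θ) (‖Z‖⁻¹ • tproj n θ (xiZ n θ Z)) Z :=
  (hasFDerivAt_nx hZ).add_const _

theorem grad_inner (hg : ContDiff ℝ (⊤ : ℕ∞) g) (ξ W : Euc n) : fderiv ℝ g ξ W = ⟪gradient g ξ, W⟫ := by
  simp [gradient]

theorem gradient_contDiff (hg : ContDiff ℝ (⊤ : ℕ∞) g) : ContDiff ℝ (⊤ : ℕ∞) (gradient g) := by
  have h := fderiv_contDiff hg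
  exact (InnerProductSpace.toDual ℝ (Euc n)).symm.toContinuousLinearEquiv.contDiff.comp h

theorem tproj_symm (ξ V W : Euc n) : ⟪tproj n θ ξ V, W⟫ = ⟪V, tproj n θ ξ W⟫ := by
  rw [tproj_apply, tproj_apply, inner_sub_left, inner_sub_right, inner_smul_left, inner_smul_right,
    real_inner_comm V (sphNormal n θ ξ)]
  simp; ring

theorem hasFDerivAt_uZ (hg : ContDiff ℝ (⊤ : ℕ∞) g) {Z : Euc n} (hZ : Z ≠ 0) :
    HasFDerivAt (uZ n θ g) (innerSL ℝ (GrZ n θ g Z)) Z := by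
  have hz : ‖Z‖ ≠ 0 := norm_ne_zero_iff.mpr hZ
  have h1 : HasFDerivAt (fun Z => g (xiZ n θ Z)) _ Z :=
    (smooth_diff hg (xiZ n θ Z)).hasFDerivAt.comp Z (hasFDerivAt_xiZ hZ)
  have h2 := (hasFDerivAt_norm' hZ).mul h1
  refine HasFDerivAt.congr_fderiv h2 ?_
  ext1 W
  simp only [add_apply, smul_apply, ContinuousLinearMap.comp_apply, innerSL_apply_apply, map_smul,
    smul_eq_mul, GrZ, inner_add_left, inner_smul_left, inner_smul_right, sgrad, tproj_symm, grad_inner hg,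
    RCLike.conj_to_real]
  field_simp
  ring

theorem hasFDerivAt_GrZ (hg : ContDiff ℝ (⊤ : ℕ∞) g) {Z : Euc n} (hZ : Z ≠ 0) :
    HasFDerivAt (GrZ n θ g) (‖Z‖⁻¹ • Qop n θ g (xiZ n θ Z)) Z := by
  have hz : ‖Z‖ ≠ 0 := norm_ne_zero_iff.mpr hZ
  have h1 : HasFDerivAt (fun Z => g (xiZ n θ Z)) _ Z :=
    (smooth_diff hg (xiZ n θ Z)).hasFDerivAt.comp Z (hasFDerivAt_xiZ hZ)
  have h2 : HasFDerivAt (fun Z => gradient g (xiZ n θ Z)) _ Z :=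
    (smooth_diff (gradient_contDiff hg) (xiZ n θ Z)).hasFDerivAt.comp Z (hasFDerivAt_xiZ hZ)
  have h3 := hasFDerivAt_nx (θ := θ) hZ
  have h4 := (h1.smul h3).add (h2.sub ((h3.inner ℝ h2).smul h3))
  have e : GrZ n θ g = fun Z => g (xiZ n θ Z) • nx n Z + (gradient g (xiZ n θ Z) -
      ⟪nx n Z, gradient g (xiZ n θ Z)⟫ • nx n Z) := by
    funext Z
    simp [GrZ, sgrad, tproj_apply]
  rw [e]
  refine HasFDerivAt.congr_fderiv h4 ?_
  ext1 W
  simp only [add_apply, sub_apply, smul_apply, ContinuousLinearMap.comp_apply, map_smul,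
    ContinuousLinearMap.smulRight_apply, smul_eq_mul, grad_inner hg, Qop, thessOp,
    ContinuousLinearMap.prod_apply, fderivInnerCLM_apply, inner_smul_left, inner_smul_right,
    RCLike.conj_to_real]
  set P := tproj n θ (xiZ n θ Z) W with hP
  rw [tproj_apply, sphNormal_xiZ, real_inner_comm P, real_inner_comm (gradient g (xiZ n θ Z)) (nx n Z)]
  module
end geo


abbrev Hs (n : ℕ) := ↥((Submodule.span ℝ {eVec n})ᗮ)

def YY (n : ℕ) (y : Hs n) : Euc n := (y : Euc n) - eVec n

def tv (n : ℕ) (θ : ℝ) (g : Euc n → ℝ) (y : Hs n) : ℝ := uZ n θ g (YY n y)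

def xiy (n : ℕ) (θ : ℝ) (y : Hs n) : Euc n := xiZ n θ (YY n y)

section geo
variable {n : ℕ} {θ : ℝ} {g : Euc n → ℝ}

theorem eVec_inner (x : Euc n) : ⟪eVec n, x⟫ = - x (Fin.last n) := by
  simp [eVec, inner_neg_left, EuclideanSpace.inner_single_left]

theorem eVec_inner' (x : Euc n) : ⟪x, eVec n⟫ = - x (Fin.last n) := by
  rw [real_inner_comm, eVec_inner]

theorem eVec_norm : ‖eVec n‖ = 1 := by simp [eVec]

theorem eVec_self : ⟪eVec n, eVec n⟫ = 1 := by rw [real_inner_self_eq_norm_sq, eVec_norm]; norm_num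

theorem Hs_inner (y : Hs n) : ⟪eVec n, (y : Euc n)⟫ = 0 :=
  Submodule.mem_orthogonal_singleton_iff_inner_right.mp y.2

theorem Hs_inner' (y : Hs n) : ⟪(y : Euc n), eVec n⟫ = 0 := by
  rw [real_inner_comm, Hs_inner]

theorem Hs_finrank : Module.finrank ℝ (Hs n) = n := by
  haveI : Fact (Module.finrank ℝ (Euc n) = n + 1) := ⟨by simp⟩
  exact Submodule.finrank_orthogonal_span_singleton (by
    intro h; have := eVec_norm (n := n); rw [h] at this; simp at this)

theorem YY_inner_e (y : Hs n) : ⟪YY n y, eVec n⟫ = -1 := by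
  rw [YY, inner_sub_left, Hs_inner', eVec_self]; norm_num

theorem YY_normsq (y : Hs n) : ‖YY n y‖ ^ 2 = 1 + ‖y‖ ^ 2 := by
  rw [YY, norm_sub_sq_real, Hs_inner', eVec_norm]
  simp; ring

theorem YY_norm (y : Hs n) : ‖YY n y‖ = Real.sqrt (1 + ‖y‖ ^ 2) := by
  rw [← YY_normsq, Real.sqrt_sq (norm_nonneg _)]

theorem YY_one_le (y : Hs n) : 1 ≤ ‖YY n y‖ := by
  rw [YY_norm]; apply Real.one_le_sqrt.mpr; nlinarith [sq_nonneg ‖y‖]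

theorem YY_ne (y : Hs n) : YY n y ≠ 0 := by
  intro h; have := YY_one_le y; rw [h] at this; simp at this; linarith

theorem hasFDerivAt_YY (y : Hs n) :
    HasFDerivAt (YY n) ((Submodule.span ℝ {eVec n})ᗮ).subtypeL y :=
  (((Submodule.span ℝ {eVec n})ᗮ).subtypeL.hasFDerivAt).sub_const _

theorem tv_hasFDerivAt (hg : ContDiff ℝ (⊤ : ℕ∞) g) (y : Hs n) :
    HasFDerivAt (tv n θ g) ((innerSL ℝ (GrZ n θ g (YY n y))).comp
      ((Submodule.span ℝ {eVec n})ᗮ).subtypeL) y :=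
  (hasFDerivAt_uZ hg (YY_ne y)).comp y (hasFDerivAt_YY y)

theorem YY_contDiff : ContDiff ℝ (⊤ : ℕ∞) (YY n) :=
  (((Submodule.span ℝ {eVec n})ᗮ).subtypeL.contDiff).sub contDiff_const

theorem tv_contDiff (hg : ContDiff ℝ (⊤ : ℕ∞) g) : ContDiff ℝ (⊤ : ℕ∞) (tv n θ g) := by
  have h1 : ContDiff ℝ (⊤ : ℕ∞) (fun y : Hs n => ‖YY n y‖) := YY_contDiff.norm ℝ YY_ne
  have h2 : ContDiff ℝ (⊤ : ℕ∞) (fun y : Hs n => xiZ n θ (YY n y)) := by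
    unfold xiZ nx
    exact ((h1.inv (fun y => norm_ne_zero_iff.mpr (YY_ne y))).smul YY_contDiff).add contDiff_const
  exact h1.mul (hg.comp h2)

theorem dd_tv (hg : ContDiff ℝ (⊤ : ℕ∞) g) (y e : Hs n) :
    dd e (tv n θ g) y = ⟪GrZ n θ g (YY n y), (e : Euc n)⟫ := by
  rw [dd, (tv_hasFDerivAt hg y).fderiv]; simp

theorem dd_dd_tv (hg : ContDiff ℝ (⊤ : ℕ∞) g) (y a e : Hs n) :
    dd a (dd e (tv n θ g)) y =
      ‖YY n y‖⁻¹ * ⟪Qop n θ g (xiy n θ y) (a : Euc n), (e : Euc n)⟫ := by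
  have h0 : dd e (tv n θ g) = fun y => ⟪GrZ n θ g (YY n y), (e : Euc n)⟫ := by
    funext y; exact dd_tv hg y e
  have h1 := ((hasFDerivAt_GrZ (θ := θ) hg (YY_ne y)).comp y (hasFDerivAt_YY y)).inner ℝ
    (hasFDerivAt_const (e : Euc n) y)
  rw [h0, dd]
  erw [h1.fderiv]
  simp [inner_smul_left, xiy]

theorem nx_inner_YY (y : Hs n) : ⟪nx n (YY n y), YY n y⟫ = ‖YY n y‖ := by
  have : ‖YY n y‖ ≠ 0 := norm_ne_zero_iff.mpr (YY_ne y)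
  rw [nx, inner_smul_left, real_inner_self_eq_norm_sq]; simp; field_simp

theorem YY_eq (y : Hs n) : YY n y = ‖YY n y‖ • nx n (YY n y) := by
  have : ‖YY n y‖ ≠ 0 := norm_ne_zero_iff.mpr (YY_ne y)
  rw [nx, smul_smul]; field_simp; simp

theorem sphNormal_xiy (y : Hs n) : sphNormal n θ (xiy n θ y) = nx n (YY n y) := sphNormal_xiZ _

theorem tproj_inner_nu {ξ : Euc n} (hξ : ‖sphNormal n θ ξ‖ = 1) (W : Euc n) :
    ⟪tproj n θ ξ W, sphNormal n θ ξ⟫ = 0 := by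
  rw [tproj_apply, inner_sub_left, inner_smul_left, real_inner_self_eq_norm_sq, hξ,
    real_inner_comm]; simp

theorem tproj_nu {ξ : Euc n} (hξ : ‖sphNormal n θ ξ‖ = 1) :
    tproj n θ ξ (sphNormal n θ ξ) = 0 := by
  rw [tproj_apply, real_inner_self_eq_norm_sq, hξ]; simp

theorem tproj_tan {ξ X : Euc n} (hX : IsTangent n θ ξ X) : tproj n θ ξ X = X := by
  rw [tproj_apply, real_inner_comm, hX]; simp

theorem xiy_norm (y : Hs n) : ‖sphNormal n θ (xiy n θ y)‖ = 1 := by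
  rw [sphNormal_xiy, nx_norm (YY_ne y)]

theorem Gr_inner_Y (y : Hs n) : ⟪GrZ n θ g (YY n y), YY n y⟫ = tv n θ g y := by
  rw [GrZ, inner_add_left, inner_smul_left, nx_inner_YY]
  have : ⟪sgrad n θ g (xiZ n θ (YY n y)), YY n y⟫ = 0 := by
    rw [YY_eq y, inner_smul_right, ← YY_eq]
    have := tproj_inner_nu (xiy_norm (θ := θ) y) (gradient g (xiy n θ y))
    rw [sphNormal_xiy] at this
    unfold sgrad; unfold xiy at this; rw [this]; ring
  rw [this, tv, uZ]; simp; ring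

theorem wf_tv (hg : ContDiff ℝ (⊤ : ℕ∞) g) (y : Hs n) :
    wf (tv n θ g) y = ⟪GrZ n θ g (YY n y), eVec n⟫ := by
  rw [wf, dd_tv hg, ← Gr_inner_Y y, ← inner_sub_right, YY]; simp

theorem Gr_normsq (y : Hs n) : ‖GrZ n θ g (YY n y)‖ ^ 2 =
    g (xiy n θ y) ^ 2 + ‖sgrad n θ g (xiy n θ y)‖ ^ 2 := by
  have h0 := tproj_inner_nu (xiy_norm (θ := θ) y) (gradient g (xiy n θ y))
  rw [sphNormal_xiy] at h0
  rw [GrZ, norm_add_sq_real, norm_smul, nx_norm (YY_ne y), inner_smul_left, real_inner_comm]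
  unfold sgrad; unfold xiy at *; rw [h0]; simp

theorem rhof_tv (hg : ContDiff ℝ (⊤ : ℕ∞) g) (y : Hs n) :
    rhof (tv n θ g) y = g (xiy n θ y) ^ 2 + ‖sgrad n θ g (xiy n θ y)‖ ^ 2 := by
  rw [← Gr_normsq, rhof, wf_tv hg, gsq]
  set G := GrZ n θ g (YY n y) with hG
  have hm : G - ⟪G, eVec n⟫ • eVec n ∈ (Submodule.span ℝ {eVec n})ᗮ := by
    rw [Submodule.mem_orthogonal_singleton_iff_inner_right, inner_sub_right, inner_smul_right,
      eVec_self, real_inner_comm]; ring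
  have h1 : fderiv ℝ (tv n θ g) y = innerSL ℝ (⟨G - ⟪G, eVec n⟫ • eVec n, hm⟩ : Hs n) := by
    rw [(tv_hasFDerivAt hg y).fderiv]
    ext a
    simp only [ContinuousLinearMap.comp_apply, innerSL_apply_apply, Submodule.coe_inner,
      Submodule.subtypeL_apply, inner_sub_left, inner_smul_left, Hs_inner]
    simp [← hG]
  rw [h1, innerSL_apply_norm]
  have : ‖(⟨G - ⟪G, eVec n⟫ • eVec n, hm⟩ : Hs n)‖ = ‖G - ⟪G, eVec n⟫ • eVec n‖ := rfl
  rw [this, norm_sub_sq_real, norm_smul, inner_smul_right, eVec_norm]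
  simp; ring

theorem xiy_last (y : Hs n) : (xiy n θ y) (Fin.last n) = ‖YY n y‖⁻¹ - Real.cos θ := by
  have h : (xiy n θ y) (Fin.last n) = - ⟪xiy n θ y, eVec n⟫ := by rw [eVec_inner']; ring
  rw [h, xiy, xiZ, nx, inner_add_left, inner_smul_left, inner_smul_left, YY_inner_e, eVec_self]
  simp; ring

theorem sec_eq (hθ : θ ∈ Set.Ioo 0 (π / 2)) : Real.sqrt (1 + Real.tan θ ^ 2) = (Real.cos θ)⁻¹ := by
  have hc : 0 < Real.cos θ := Real.cos_pos_of_mem_Ioo ⟨by linarith [hθ.1, Real.pi_pos], hθ.2⟩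
  rw [Real.sqrt_eq_iff_mul_self_eq_of_pos (by positivity)]
  rw [Real.tan_eq_sin_div_cos]; field_simp
  nlinarith [Real.sin_sq_add_cos_sq θ]

theorem tan_pos' (hθ : θ ∈ Set.Ioo 0 (π / 2)) : 0 < Real.tan θ :=
  Real.tan_pos_of_pos_of_lt_pi_div_two hθ.1 hθ.2

theorem cos_pos' (hθ : θ ∈ Set.Ioo 0 (π / 2)) : 0 < Real.cos θ :=
  Real.cos_pos_of_mem_Ioo ⟨by linarith [hθ.1, Real.pi_pos], hθ.2⟩

theorem YY_le (hθ : θ ∈ Set.Ioo 0 (π / 2)) {y : Hs n} (hy : ‖y‖ ≤ Real.tan θ) :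
    ‖YY n y‖ ≤ (Real.cos θ)⁻¹ := by
  rw [YY_norm, ← sec_eq hθ]; gcongr

theorem xiy_mem (hθ : θ ∈ Set.Ioo 0 (π / 2)) {y : Hs n} (hy : ‖y‖ ≤ Real.tan θ) :
    xiy n θ y ∈ cap n θ := by
  refine ⟨?_, xiy_norm y⟩
  rw [xiy_last]
  have h1 := YY_le hθ hy
  have h2 := cos_pos' hθ
  have h3 := YY_one_le y
  have : Real.cos θ ≤ ‖YY n y‖⁻¹ := by
    rw [le_inv_comm₀ h2 (by linarith)]; exact h1
  linarith

theorem xiy_bdry (hθ : θ ∈ Set.Ioo 0 (π / 2)) {y : Hs n} (hy : ‖y‖ = Real.tan θ) :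
    xiy n θ y ∈ capBdry n θ := by
  refine ⟨?_, xiy_norm y⟩
  rw [xiy_last, YY_norm, hy, sec_eq hθ]; simp

theorem xiy_surj (hθ : θ ∈ Set.Ioo 0 (π / 2)) {ξ : Euc n} (hξ : ξ ∈ cap n θ) :
    ∃ y : Hs n, ‖y‖ ≤ Real.tan θ ∧ xiy n θ y = ξ := by
  obtain ⟨h1, h2⟩ := hξ
  set x := sphNormal n θ ξ with hx
  have hc := cos_pos' hθ
  set t := - ⟪x, eVec n⟫ with ht
  have hxt : t = ξ (Fin.last n) + Real.cos θ := by
    rw [ht, hx, sphNormal, inner_sub_left, inner_smul_left, eVec_self, eVec_inner']; simp; ring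
  have ht0 : Real.cos θ ≤ t := by linarith
  have htp : 0 < t := by linarith
  have hm : t⁻¹ • x + eVec n ∈ (Submodule.span ℝ {eVec n})ᗮ := by
    rw [Submodule.mem_orthogonal_singleton_iff_inner_right, inner_add_right, inner_smul_right,
      eVec_self, real_inner_comm]
    have : ⟪x, eVec n⟫ = -t := by rw [ht]; ring
    rw [this]; field_simp; ring
  have hY : YY n (⟨t⁻¹ • x + eVec n, hm⟩ : Hs n) = t⁻¹ • x := by simp [YY]
  have hYn : ‖YY n (⟨t⁻¹ • x + eVec n, hm⟩ : Hs n)‖ = t⁻¹ := by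
    rw [hY, norm_smul, h2, Real.norm_of_nonneg (by positivity), mul_one]
  refine ⟨⟨t⁻¹ • x + eVec n, hm⟩, ?_, ?_⟩
  · have h3 := YY_normsq (⟨t⁻¹ • x + eVec n, hm⟩ : Hs n)
    rw [hYn] at h3
    have h4 : t⁻¹ ≤ (Real.cos θ)⁻¹ := inv_anti₀ hc ht0
    have h5 : (Real.cos θ)⁻¹ ^ 2 = 1 + Real.tan θ ^ 2 := by
      rw [← sec_eq hθ, Real.sq_sqrt (by positivity)]
    have h6 : t⁻¹ ^ 2 ≤ (Real.cos θ)⁻¹ ^ 2 := by gcongr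
    exact abs_le_of_sq_le_sq' (by linarith) (tan_pos' hθ).le |>.2
  · rw [xiy, xiZ, nx, hYn, hY, smul_smul, inv_inv, mul_inv_cancel₀ htp.ne', one_smul, hx, sphNormal]
    simp

theorem wf_bdry (hθ : θ ∈ Set.Ioo 0 (π / 2)) (hg : ContDiff ℝ (⊤ : ℕ∞) g) (hR : RobinBC n θ g)
    {y : Hs n} (hy : ‖y‖ = Real.tan θ) : wf (tv n θ g) y = 0 := by
  have hb := hR _ (xiy_bdry hθ hy)
  have hc := cos_pos' hθ
  have hs : 0 < Real.sin θ := Real.sin_pos_of_pos_of_lt_pi hθ.1 (by linarith [hθ.2, Real.pi_pos])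
  have h0 := tproj_inner_nu (xiy_norm (θ := θ) y) (gradient g (xiy n θ y))
  have hY : ‖YY n y‖⁻¹ = Real.cos θ := by rw [YY_norm, hy, sec_eq hθ, inv_inv]
  rw [wf_tv hg, GrZ, inner_add_left, inner_smul_left, nx, inner_smul_left, YY_inner_e, hY]
  have h1 : xiy n θ y = sphNormal n θ (xiy n θ y) + Real.cos θ • eVec n := by simp [sphNormal]
  have h2 : ⟪sgrad n θ g (xiy n θ y), xiy n θ y⟫
      = Real.cos θ * ⟪sgrad n θ g (xiy n θ y), eVec n⟫ := by
    conv_lhs => rw [h1]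
    rw [inner_add_right, inner_smul_right, ← h1, sgrad, h0]; ring
  rw [conormal, inner_add_right, inner_smul_right, inner_smul_right, h2, Real.cot_eq_cos_div_sin] at hb
  have h3 : ⟪sgrad n θ g (xiy n θ y), eVec n⟫ = Real.cos θ * g (xiy n θ y) := by
    field_simp at hb
    rw [Real.cos_sq_add_sin_sq, mul_one] at hb; exact hb
  unfold xiy at h3
  rw [h3]; simp; ring

end geo


theorem gram_det {V ι : Type*} [NormedAddCommGroup V] [InnerProductSpace ℝ V] [Fintype ι]
    [DecidableEq ι] (o : OrthonormalBasis ι ℝ V) (M : V →ₗ[ℝ] V) (c : ι → V) :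
    (Matrix.of fun i j => ⟪c i, M (c j)⟫).det =
      LinearMap.det M * (Matrix.of fun i j => ⟪c i, c j⟫).det := by
  set Cm : Matrix ι ι ℝ := Matrix.of fun k i => ⟪o k, c i⟫ with hC
  set A : Matrix ι ι ℝ := LinearMap.toMatrix o.toBasis o.toBasis M with hA
  have hexp : ∀ u w : V, ⟪u, w⟫ = ∑ k, ⟪o k, u⟫ * ⟪o k, w⟫ := by
    intro u w
    rw [← o.sum_inner_mul_inner]
    exact Finset.sum_congr rfl fun k _ => by rw [real_inner_comm]
  have hAe : ∀ k l, A k l = ⟪o k, M (o l)⟫ := by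
    intro k l
    rw [hA, LinearMap.toMatrix_apply]; simp [OrthonormalBasis.repr_apply_apply]
  have h1 : (Matrix.of fun i j => ⟪c i, c j⟫) = Cm.transpose * Cm := by
    ext i j; simp only [Matrix.of_apply, Matrix.mul_apply, Matrix.transpose_apply, hC]; exact hexp _ _
  have h2 : (Matrix.of fun i j => ⟪c i, M (c j)⟫) = Cm.transpose * (A * Cm) := by
    ext i j
    simp only [Matrix.of_apply, Matrix.mul_apply, Matrix.transpose_apply, hC]
    rw [hexp]
    refine Finset.sum_congr rfl fun k _ => ?_
    congr 1
    have : c j = ∑ l, ⟪o l, c j⟫ • o l := (o.sum_repr' (c j)).symm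
    conv_lhs => rw [this]
    rw [map_sum, inner_sum]
    refine Finset.sum_congr rfl fun l _ => ?_
    rw [map_smul, inner_smul_right, hAe]; ring
  rw [h1, h2, Matrix.det_mul, Matrix.det_mul, Matrix.det_mul, hA, LinearMap.det_toMatrix]; ring

section geo
variable {n : ℕ} {θ : ℝ} {g : Euc n → ℝ}

theorem tproj_idem {ξ : Euc n} (hξ : ‖sphNormal n θ ξ‖ = 1) (W : Euc n) :
    tproj n θ ξ (tproj n θ ξ W) = tproj n θ ξ W :=
  tproj_tan (tproj_inner_nu hξ W)

theorem Qop_inner {ξ : Euc n} (hξ : ‖sphNormal n θ ξ‖ = 1) (a e : Euc n) :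
    ⟪Qop n θ g ξ a, e⟫ = shess n θ g ξ (tproj n θ ξ a) (tproj n θ ξ e)
      + g ξ * ⟪tproj n θ ξ a, tproj n θ ξ e⟫ := by
  have h : ⟪tproj n θ ξ a, tproj n θ ξ e⟫ = ⟪tproj n θ ξ a, e⟫ := by
    rw [← tproj_symm, tproj_idem hξ]
  simp only [Qop, thessOp, shess, add_apply, sub_apply, smul_apply, ContinuousLinearMap.comp_apply,
    inner_add_left, inner_sub_left, inner_smul_left, tproj_symm, RCLike.conj_to_real]
  rw [← tproj_symm ξ a e, tproj_idem hξ, ← tproj_symm ξ a e]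

theorem Qop_nu {ξ : Euc n} (hξ : ‖sphNormal n θ ξ‖ = 1) :
    Qop n θ g ξ (sphNormal n θ ξ) = 0 := by
  simp [Qop, thessOp, tproj_nu hξ]

theorem Qop_inner_nu {ξ : Euc n} (hξ : ‖sphNormal n θ ξ‖ = 1) (a : Euc n) :
    ⟪Qop n θ g ξ a, sphNormal n θ ξ⟫ = 0 := by
  rw [Qop_inner hξ, tproj_nu hξ]; simp [shess]

theorem nx_inner_e (y : Hs n) : ⟪nx n (YY n y), eVec n⟫ = -‖YY n y‖⁻¹ := by
  rw [nx, inner_smul_left, YY_inner_e]; simp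

theorem nx_inner_Hs (y b : Hs n) : ⟪nx n (YY n y), (b : Euc n)⟫ = ‖YY n y‖⁻¹ * ⟪y, b⟫ := by
  rw [nx, inner_smul_left, YY, inner_sub_left, Hs_inner]; simp

theorem tproj_Hs_ne (y : Hs n) {a : Hs n} (ha : a ≠ 0) : tproj n θ (xiy n θ y) (a : Euc n) ≠ 0 := by
  intro h
  rw [tproj_apply, sphNormal_xiy] at h
  have h1 : ⟪(a : Euc n) - ⟪nx n (YY n y), (a : Euc n)⟫ • nx n (YY n y), eVec n⟫ = 0 := by
    rw [h]; simp
  rw [inner_sub_left, inner_smul_left, Hs_inner', nx_inner_e] at h1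
  have h2 : ‖YY n y‖⁻¹ ≠ 0 := inv_ne_zero (norm_ne_zero_iff.mpr (YY_ne y))
  have h3 : ⟪nx n (YY n y), (a : Euc n)⟫ = 0 := by
    simp only [RCLike.conj_to_real] at h1
    have : ⟪nx n (YY n y), (a : Euc n)⟫ * ‖YY n y‖⁻¹ = 0 := by linarith
    exact (mul_eq_zero.mp this).resolve_right h2
  rw [h3] at h
  apply ha
  simpa using h

theorem conv_tv (hθ : θ ∈ Set.Ioo 0 (π / 2)) (hg : ContDiff ℝ (⊤ : ℕ∞) g) (hc : IsConvexSol n θ g)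
    {y : Hs n} (hy : ‖y‖ ≤ Real.tan θ) {a : Hs n} (ha : a ≠ 0) :
    0 < dd a (dd a (tv n θ g)) y := by
  rw [dd_dd_tv hg, Qop_inner (xiy_norm y)]
  have := YY_one_le y
  exact mul_pos (by positivity) (hc _ (xiy_mem hθ hy) _ (tproj_inner_nu (xiy_norm y) _) (tproj_Hs_ne y ha))

theorem det_Q (y : Hs n) (b : OrthonormalBasis (Fin n) ℝ (Hs n)) :
    (Matrix.of fun i j => ⟪(b i : Euc n), Qop n θ g (xiy n θ y) (b j : Euc n)⟫).det =
      sdet n θ g (xiy n θ y) * (‖YY n y‖⁻¹) ^ 2 := by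
  set x := nx n (YY n y) with hx
  set s := ‖YY n y‖ with hs
  have hs1 : 1 ≤ s := YY_one_le y
  have hxn : ‖x‖ = 1 := nx_norm (YY_ne y)
  set ξ := xiy n θ y with hξ
  have hν : sphNormal n θ ξ = x := sphNormal_xiy y
  have hν1 : ‖sphNormal n θ ξ‖ = 1 := xiy_norm y
  set c : Fin n ⊕ Fin 1 → Euc n := Sum.elim (fun i => (b i : Euc n)) (fun _ => x) with hc
  have key := gram_det ((EuclideanSpace.basisFun (Fin (n+1)) ℝ).reindex finSumFinEquiv.symm)
    (hessOp n θ g ξ).toLinearMap c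
  have hx1 : ⟪x, x⟫ = 1 := by rw [real_inner_self_eq_norm_sq, hxn]; norm_num
  have hM : ∀ W, hessOp n θ g ξ W = Qop n θ g ξ W + ⟪x, W⟫ • x := by
    intro W; simp [hessOp, Qop, normalPart, hν]
  have hbb : ∀ i j, ⟪(b i : Euc n), (b j : Euc n)⟫ = if i = j then (1:ℝ) else 0 := by
    intro i j
    rw [← Submodule.coe_inner]; exact orthonormal_iff_ite.mp b.orthonormal i j
  have hQx : Qop n θ g ξ x = 0 := by rw [← hν]; exact Qop_nu hν1
  have hxQ : ∀ W, ⟪x, Qop n θ g ξ W⟫ = 0 := by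
    intro W; rw [real_inner_comm, ← hν]; exact Qop_inner_nu hν1 W
  have hL : (Matrix.of fun i j => ⟪c i, (hessOp n θ g ξ).toLinearMap (c j)⟫) = Matrix.fromBlocks
      (Matrix.of fun i j => ⟪(b i : Euc n), Qop n θ g ξ (b j : Euc n)⟫ + ⟪x, (b i : Euc n)⟫ * ⟪x, (b j : Euc n)⟫)
      (Matrix.of fun i _ => ⟪x, (b i : Euc n)⟫) (Matrix.of fun _ j => ⟪x, (b j : Euc n)⟫) 1 := by
    ext i j
    rcases i with i | i <;> rcases j with j | j
    · simp only [hc, Matrix.of_apply, Matrix.fromBlocks_apply₁₁, Sum.elim_inl,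
        ContinuousLinearMap.coe_coe, hM, inner_add_right, inner_smul_right]
      rw [real_inner_comm x (b i : Euc n)]; ring
    · simp only [hc, Matrix.of_apply, Matrix.fromBlocks_apply₁₂, Sum.elim_inl, Sum.elim_inr,
        ContinuousLinearMap.coe_coe, hM, inner_add_right, inner_smul_right, hQx, hx1]
      rw [real_inner_comm x (b i : Euc n)]; simp
    · simp only [hc, Matrix.of_apply, Matrix.fromBlocks_apply₂₁, Sum.elim_inl, Sum.elim_inr,
        ContinuousLinearMap.coe_coe, hM, inner_add_right, inner_smul_right, hxQ, hx1]
      simp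
    · simp only [hc, Matrix.of_apply, Matrix.fromBlocks_apply₂₂, Sum.elim_inr,
        ContinuousLinearMap.coe_coe, hM, inner_add_right, inner_smul_right, hxQ, hx1]
      rw [Subsingleton.elim i j]; simp
  have hG : (Matrix.of fun i j => ⟪c i, c j⟫) = Matrix.fromBlocks 1
      (Matrix.of fun i _ => ⟪x, (b i : Euc n)⟫) (Matrix.of fun _ j => ⟪x, (b j : Euc n)⟫) 1 := by
    ext i j
    rcases i with i | i <;> rcases j with j | j
    · simp only [hc, Matrix.of_apply, Matrix.fromBlocks_apply₁₁, Sum.elim_inl, hbb, Matrix.one_apply]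
    · simp only [hc, Matrix.of_apply, Matrix.fromBlocks_apply₁₂, Sum.elim_inl, Sum.elim_inr]
      rw [real_inner_comm]
    · simp only [hc, Matrix.of_apply, Matrix.fromBlocks_apply₂₁, Sum.elim_inl, Sum.elim_inr]
    · simp only [hc, Matrix.of_apply, Matrix.fromBlocks_apply₂₂, Sum.elim_inr, hx1]
      rw [Subsingleton.elim i j]; simp
  rw [hL, hG, Matrix.det_fromBlocks_one₂₂, Matrix.det_fromBlocks_one₁₁] at key
  have hl : (Matrix.of fun i j => ⟪(b i : Euc n), Qop n θ g ξ (b j : Euc n)⟫ + ⟪x, (b i : Euc n)⟫ * ⟪x, (b j : Euc n)⟫)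
      - (Matrix.of fun i (_ : Fin 1) => ⟪x, (b i : Euc n)⟫) * (Matrix.of fun (_ : Fin 1) j => ⟪x, (b j : Euc n)⟫)
      = Matrix.of fun i j => ⟪(b i : Euc n), Qop n θ g ξ (b j : Euc n)⟫ := by
    ext i j
    simp [Matrix.mul_apply]
  rw [hl] at key
  rw [key, sdet]
  congr 1
  rw [Matrix.det_fin_one]
  simp only [Matrix.sub_apply, Matrix.mul_apply, Matrix.of_apply, Matrix.one_apply_eq]
  have hsum : ∑ i, ⟪x, (b i : Euc n)⟫ * ⟪x, (b i : Euc n)⟫ = s⁻¹ ^ 2 * ‖y‖ ^ 2 := by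
    rw [← b.sum_sq_norm_inner_right y, Finset.mul_sum]
    refine Finset.sum_congr rfl fun i _ => ?_
    rw [hx, nx_inner_Hs, ← hs, real_inner_comm, Real.norm_eq_abs, sq_abs]; ring
  rw [hsum]
  have h5 := YY_normsq y
  rw [← hs] at h5
  have h6 : ‖y‖ ^ 2 = s ^ 2 - 1 := by linarith
  rw [h6]; field_simp; ring

theorem det_tv (hg : ContDiff ℝ (⊤ : ℕ∞) g) (y : Hs n) (b : OrthonormalBasis (Fin n) ℝ (Hs n)) :
    (Matrix.of fun i j => dd (b i) (dd (b j) (tv n θ g)) y).det =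
      (‖YY n y‖⁻¹) ^ (n + 2) * sdet n θ g (xiy n θ y) := by
  have h : (Matrix.of fun i j => dd (b i) (dd (b j) (tv n θ g)) y) = ‖YY n y‖⁻¹ •
      (Matrix.of fun i j => ⟪(b i : Euc n), Qop n θ g (xiy n θ y) (b j : Euc n)⟫).transpose := by
    ext i j
    simp only [Matrix.of_apply, Matrix.smul_apply, Matrix.transpose_apply, dd_dd_tv hg, smul_eq_mul]
    rw [real_inner_comm]
  rw [h, Matrix.det_smul, Matrix.det_transpose, det_Q, Fintype.card_fin]; ring

end geo


theorem dd_le_norm {E : Type*} [NormedAddCommGroup E] [InnerProductSpace ℝ E] {W : E → ℝ}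
    {y e : E} (he : ‖e‖ = 1) : |dd e W y| ≤ ‖fderiv ℝ W y‖ := by
  have := (fderiv ℝ W y).le_opNorm e
  rw [he, mul_one, Real.norm_eq_abs] at this; exact this

theorem W_bounds {E : Type*} [NormedAddCommGroup E] [InnerProductSpace ℝ E] [FiniteDimensional ℝ E]
    (R : ℝ) {W : E → ℝ} (hW : ContDiff ℝ (⊤ : ℕ∞) W) (hp : ∀ y, 0 < W y) :
    ∃ w : ℝ, 0 ≤ w ∧ ∀ y, ‖y‖ ≤ R → W y ≤ w ∧ 1 / W y ≤ w ∧
      ∀ e, ‖e‖ = 1 → |dd e W y| ≤ w ∧ |dd e (dd e W) y| ≤ w := by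
  have hK : IsCompact (Metric.closedBall (0:E) R) := isCompact_closedBall 0 R
  have h1 := fderiv_contDiff hW
  have h2 : ContDiff ℝ (⊤ : ℕ∞) (fderiv ℝ (fderiv ℝ W)) := h1.fderiv_right (by exact_mod_cast le_top)
  have h3 : Continuous (fun y => ‖fderiv ℝ (fderiv ℝ W) y‖) := by
    have := h2.continuous
    exact @Continuous.norm _ (E →L[ℝ] E →L[ℝ] ℝ) _ _ _ this
  obtain ⟨c1, k1⟩ := hK.exists_bound_of_continuousOn hW.continuous.continuousOn
  obtain ⟨c2, k2⟩ := hK.exists_bound_of_continuousOn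
    (hW.continuous.inv₀ (fun y => (hp y).ne')).continuousOn
  obtain ⟨c3, k3⟩ := hK.exists_bound_of_continuousOn h1.continuous.continuousOn
  obtain ⟨c4, k4⟩ := hK.exists_bound_of_continuousOn h3.continuousOn
  refine ⟨|c1| + |c2| + |c3| + |c4|, by positivity, fun y hy => ?_⟩
  have hm : y ∈ Metric.closedBall (0:E) R := by simpa using hy
  have a1 := k1 y hm
  have a2 : ‖(W y)⁻¹‖ ≤ c2 := k2 y hm
  have a3 : ‖fderiv ℝ W y‖ ≤ c3 := k3 y hm
  have a4 := k4 y hm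
  rw [Real.norm_eq_abs] at a4
  replace a4 : ‖fderiv ℝ (fderiv ℝ W) y‖ ≤ c4 := (le_abs_self _).trans a4
  have b1 := le_abs_self c1
  have b2 := le_abs_self c2
  have b3 := le_abs_self c3
  have b4 := le_abs_self c4
  have d1 := abs_nonneg c1
  have d2 := abs_nonneg c2
  have d3 := abs_nonneg c3
  have d4 := abs_nonneg c4
  rw [Real.norm_eq_abs] at a1 a2
  refine ⟨by linarith [le_abs_self (W y)], ?_, fun e he => ⟨?_, ?_⟩⟩
  · rw [one_div]; linarith [le_abs_self (W y)⁻¹]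
  · linarith [dd_le_norm (W := W) (y := y) he]
  · rw [dd_dd hW]
    have e1 := (fderiv ℝ (fderiv ℝ W) y e).le_opNorm e
    have e2 := (fderiv ℝ (fderiv ℝ W) y).le_opNorm e
    rw [he, mul_one] at e1 e2
    rw [Real.norm_eq_abs] at e1
    linarith

theorem mul_jets {E : Type*} [NormedAddCommGroup E] [InnerProductSpace ℝ E] {A B : E → ℝ}
    (hA : ContDiff ℝ (⊤ : ℕ∞) A) (hB : ContDiff ℝ (⊤ : ℕ∞) B) (y e : E) :
    dd e (fun y => A y * B y) y = dd e A y * B y + A y * dd e B y ∧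
    dd e (dd e (fun y => A y * B y)) y = dd e (dd e A) y * B y + 2 * (dd e A y * dd e B y)
      + A y * dd e (dd e B) y := by
  have h := (dd_jet (hA.mul hB) y e).unique ((dd_jet hA y e).mul (dd_jet hB y e))
    (Filter.Eventually.of_forall fun s => rfl)
  exact ⟨h.2.1, h.2.2⟩

def Wt (n : ℕ) (p : ℝ) (y : Hs n) : ℝ :=
  Real.exp (-(((n : ℝ) + 2 + p) / 2) * Real.log (1 + ‖y‖ ^ 2))

section geo
variable {n : ℕ} {θ : ℝ}

theorem Wt_contDiff (p : ℝ) : ContDiff ℝ (⊤ : ℕ∞) (Wt n p) := by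
  unfold Wt
  refine (contDiff_const.mul (ContDiff.log ?_ ?_)).exp
  · exact contDiff_const.add (contDiff_norm_sq ℝ)
  · intro y; positivity

theorem tproj_norm_le {ξ : Euc n} (hξ : ‖sphNormal n θ ξ‖ = 1) (W : Euc n) :
    ‖tproj n θ ξ W‖ ≤ ‖W‖ := by
  have h : ‖tproj n θ ξ W‖ ^ 2 = ‖W‖ ^ 2 - ⟪sphNormal n θ ξ, W⟫ ^ 2 := by
    rw [tproj_apply, norm_sub_sq_real, norm_smul, hξ, inner_smul_right, real_inner_comm]
    simp; ring
  have : ‖tproj n θ ξ W‖ ^ 2 ≤ ‖W‖ ^ 2 := by rw [h]; nlinarith [sq_nonneg ⟪sphNormal n θ ξ, W⟫]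
  exact (abs_le_of_sq_le_sq' this (norm_nonneg _)).2

theorem f_bounds (hθ : θ ∈ Set.Ioo 0 (π / 2)) {f : Euc n → ℝ} (hf : ContDiff ℝ (⊤ : ℕ∞) f)
    {m₁ K₁ : ℝ} (hm : 0 < m₁) (h1 : ∀ ξ ∈ cap n θ, m₁ ≤ f ξ) (h2 : CTwoNormLe n θ f K₁) {y : Hs n}
    (hy : ‖y‖ ≤ Real.tan θ) : 0 < K₁ ∧ m₁ ≤ tv n θ f y ∧ tv n θ f y ≤ (Real.cos θ)⁻¹ * K₁ ∧
      ∀ e, ‖e‖ = 1 → |dd e (tv n θ f) y| ≤ 2 * K₁ ∧ |dd e (dd e (tv n θ f)) y| ≤ 2 * K₁ := by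
  obtain ⟨⟨h3, h4⟩, h5⟩ := h2
  have hξ := xiy_mem hθ hy
  have a1 := h1 _ hξ
  have a2 := h3 _ hξ
  have a3 := h4 _ hξ
  have s1 := YY_one_le y
  have s2 := YY_le hθ hy
  have a4 := le_abs_self (f (xiy n θ y))
  have hK : 0 < K₁ := by linarith
  have hfp : 0 < f (xiy n θ y) := by linarith
  have htv : tv n θ f y = ‖YY n y‖ * f (xiy n θ y) := rfl
  refine ⟨hK, by rw [htv]; nlinarith, ?_, fun e he => ⟨?_, ?_⟩⟩
  · rw [htv]; exact mul_le_mul s2 (by linarith) hfp.le (by linarith)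
  · rw [dd_tv hf]
    have b1 := abs_real_inner_le_norm (GrZ n θ f (YY n y)) (e : Euc n)
    have b2 : ‖(e : Euc n)‖ = 1 := he
    have b3 := Gr_normsq (θ := θ) (g := f) y
    rw [b2, mul_one] at b1
    refine b1.trans ?_
    have b4 : f (xiy n θ y) ^ 2 ≤ K₁ ^ 2 := by
      apply pow_le_pow_left₀ hfp.le; linarith
    have b5 : ‖sgrad n θ f (xiy n θ y)‖ ^ 2 ≤ K₁ ^ 2 := by gcongr
    have b6 : ‖GrZ n θ f (YY n y)‖ ^ 2 ≤ (2 * K₁) ^ 2 := by nlinarith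
    exact (abs_le_of_sq_le_sq' b6 (by linarith)).2
  · rw [dd_dd_tv hf, Qop_inner (xiy_norm y), abs_mul]
    set P := tproj n θ (xiy n θ y) (e : Euc n) with hP
    have b2 : ‖(e : Euc n)‖ = 1 := he
    have hPn : ‖P‖ ≤ 1 := by rw [← b2]; exact tproj_norm_le (xiy_norm y) _
    have hT : IsTangent n θ (xiy n θ y) P := tproj_inner_nu (xiy_norm y) _
    have b3 := h5 _ hξ P P hT hT
    have b4 : K₁ * ‖P‖ * ‖P‖ ≤ K₁ := by
      have : ‖P‖ * ‖P‖ ≤ 1 := by nlinarith [norm_nonneg P]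
      nlinarith
    have b5 : |f (xiy n θ y) * ⟪P, P⟫| ≤ K₁ := by
      rw [abs_mul, real_inner_self_eq_norm_sq, abs_of_nonneg (sq_nonneg ‖P‖)]
      have : ‖P‖ ^ 2 ≤ 1 := by nlinarith [norm_nonneg P]
      nlinarith [abs_nonneg (f (xiy n θ y)), sq_nonneg ‖P‖]
    have b6 := abs_add_le (shess n θ f (xiy n θ y) P P) (f (xiy n θ y) * ⟪P, P⟫)
    have b7 : |‖YY n y‖⁻¹| ≤ 1 := by
      rw [abs_of_nonneg (by positivity)]; exact inv_le_one_of_one_le₀ s1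
    have b8 : |shess n θ f (xiy n θ y) P P + f (xiy n θ y) * ⟪P, P⟫| ≤ 2 * K₁ := by linarith
    calc _ ≤ 1 * (2 * K₁) := mul_le_mul b7 b8 (abs_nonneg _) zero_le_one
      _ = _ := one_mul _

theorem eq_tv (hθ : θ ∈ Set.Ioo 0 (π / 2)) {p q : ℝ} {f h : Euc n → ℝ}
    (hfp : ∀ ξ ∈ cap n θ, 0 < f ξ) (hh : ContDiff ℝ (⊤ : ℕ∞) h) (hhp : PosOnCap n θ h)
    (hS : SolvesEq n θ p q f h) {y : Hs n} (hy : ‖y‖ ≤ Real.tan θ)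
    (b : OrthonormalBasis (Fin n) ℝ (Hs n)) :
    Real.log (Matrix.of fun i j => dd (b i) (dd (b j) (tv n θ h)) y).det =
      Real.log (tv n θ f y * Wt n p y) + (p - 1) * Real.log (tv n θ h y)
        + (((n : ℝ) + 1 - q) / 2) * Real.log (rhof (tv n θ h) y) := by
  have hξ := xiy_mem hθ hy
  have s1 := YY_one_le y
  have hs : 0 < ‖YY n y‖ := by linarith
  have f0 := hfp _ hξ
  have h0 := hhp _ hξ
  have r0 : 0 < h (xiy n θ y) ^ 2 + ‖sgrad n θ h (xiy n θ y)‖ ^ 2 := by positivity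
  have htf : tv n θ f y = ‖YY n y‖ * f (xiy n θ y) := rfl
  have hth : tv n θ h y = ‖YY n y‖ * h (xiy n θ y) := rfl
  have hls : Real.log (1 + ‖y‖ ^ 2) = 2 * Real.log ‖YY n y‖ := by
    rw [← YY_normsq, Real.log_pow]; norm_num
  rw [det_tv hh, hS _ hξ, rhof_tv hh, htf, hth, eqRHS, Wt]
  rw [Real.log_mul (by positivity) (by positivity), Real.log_mul (by positivity) (by positivity),
    Real.log_mul (by positivity) (by positivity), Real.log_mul (by positivity) (Real.exp_ne_zero _),
    Real.log_mul (by positivity) (by positivity), Real.log_mul (by positivity) (by positivity),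
    Real.log_exp, Real.log_rpow h0, Real.log_rpow r0, Real.log_pow, Real.log_inv, hls]
  push_cast
  ring

theorem h_bounds (hθ : θ ∈ Set.Ioo 0 (π / 2)) {h : Euc n → ℝ} (hh : ContDiff ℝ (⊤ : ℕ∞) h)
    {m₂ K₂ : ℝ} (hm : 0 < m₂) (h1 : ∀ ξ ∈ cap n θ, m₂ ≤ h ξ) (h2 : CZeroNormLe n θ h K₂)
    (hc : IsConvexSol n θ h) (hR : RobinBC n θ h) {y : Hs n} (hy : ‖y‖ ≤ Real.tan θ) :
    m₂ ≤ tv n θ h y ∧ tv n θ h y ≤ (Real.cos θ)⁻¹ * K₂ ∧ m₂ ^ 2 ≤ rhof (tv n θ h) y ∧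
    (∀ e, ‖e‖ = 1 → |dd e (tv n θ h) y| ≤ (Real.cos θ)⁻¹ * K₂ / Real.tan θ) ∧
    |dd y (tv n θ h) y| ≤ (Real.cos θ)⁻¹ * K₂ := by
  have hv := tv_contDiff (θ := θ) hh
  have hM : ∀ y : Hs n, ‖y‖ ≤ Real.tan θ → m₂ ≤ tv n θ h y ∧ tv n θ h y ≤ (Real.cos θ)⁻¹ * K₂ := by
    intro y hy
    have hξ := xiy_mem hθ hy
    have a1 := h1 _ hξ
    have a2 := h2 _ hξ
    have s1 := YY_one_le y
    have s2 := YY_le hθ hy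
    have a4 := le_abs_self (h (xiy n θ y))
    have htv : tv n θ h y = ‖YY n y‖ * h (xiy n θ y) := rfl
    refine ⟨by rw [htv]; nlinarith, ?_⟩
    rw [htv]; exact mul_le_mul s2 (by linarith) (by linarith) (by linarith)
  have hg : ∀ y : Hs n, ‖y‖ ≤ Real.tan θ → ∀ e, ‖e‖ = 1 →
      dd e (tv n θ h) y ≤ (Real.cos θ)⁻¹ * K₂ / Real.tan θ := by
    refine grad_bound (tan_pos' hθ) hv ?_ ?_ (fun y hy => (hM y hy).2)
    · intro y hy e
      by_cases he : e = 0
      · subst he; simp [dd]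
      · exact (conv_tv hθ hh hc hy he).le
    · intro y hy
      have := wf_bdry hθ hh hR hy
      rw [wf] at this; linarith
  have hga : ∀ e, ‖e‖ = 1 → |dd e (tv n θ h) y| ≤ (Real.cos θ)⁻¹ * K₂ / Real.tan θ := by
    intro e he
    rw [abs_le]
    have k1 := hg y hy e he
    have k2 := hg y hy (-e) (by rw [norm_neg, he])
    have : dd (-e) (tv n θ h) y = - dd e (tv n θ h) y := by simp [dd]
    rw [this] at k2
    exact ⟨by linarith, k1⟩
  have hM0 : 0 ≤ (Real.cos θ)⁻¹ * K₂ := by have := hM y hy; linarith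
  refine ⟨(hM y hy).1, (hM y hy).2, ?_, hga, ?_⟩
  · rw [rhof_tv hh]
    have := h1 _ (xiy_mem hθ hy)
    have : m₂ ^ 2 ≤ h (xiy n θ y) ^ 2 := by gcongr
    nlinarith [sq_nonneg ‖sgrad n θ h (xiy n θ y)‖]
  · by_cases h0 : y = 0
    · have hz : dd y (tv n θ h) y = 0 := by
        have : ∀ z : Hs n, dd (0 : Hs n) (tv n θ h) z = 0 := fun z => by simp [dd]
        rw [h0]; exact this 0
      rw [hz, abs_zero]; exact hM0
    · have hn : ‖y‖ ≠ 0 := norm_ne_zero_iff.mpr h0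
      have k1 := hga (‖y‖⁻¹ • y) (by rw [norm_smul, norm_inv, norm_norm, inv_mul_cancel₀ hn])
      rw [dd_smul, abs_mul, abs_of_nonneg (by positivity : (0:ℝ) ≤ ‖y‖⁻¹)] at k1
      have ht := tan_pos' hθ
      have k2 : |dd y (tv n θ h) y| ≤ ‖y‖ * ((Real.cos θ)⁻¹ * K₂ / Real.tan θ) := by
        rw [inv_mul_le_iff₀ (by positivity)] at k1; exact k1
      calc _ ≤ _ := k2
        _ ≤ Real.tan θ * ((Real.cos θ)⁻¹ * K₂ / Real.tan θ) := by
          apply mul_le_mul_of_nonneg_right hy (by positivity)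
        _ = _ := by field_simp

theorem flat_exists (hθ : θ ∈ Set.Ioo 0 (π / 2)) (p q : ℝ) {m₁ m₂ K₁ K₂ : ℝ} (hm₁ : 0 < m₁)
    (hm₂ : 0 < m₂) : ∃ N : ℝ, ∀ f h : Euc n → ℝ,
        ContDiff ℝ (⊤ : ℕ∞) f → (∀ ξ ∈ cap n θ, 0 < f ξ) →
        (∀ ξ ∈ cap n θ, m₁ ≤ f ξ) → CTwoNormLe n θ f K₁ →
        ContDiff ℝ (⊤ : ℕ∞) h → PosOnCap n θ h →
        (∀ ξ ∈ cap n θ, m₂ ≤ h ξ) → CZeroNormLe n θ h K₂ →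
        IsConvexSol n θ h → SolvesEq n θ p q f h → RobinBC n θ h →
        FlatSol n (Real.tan θ) N (p - 1) (((n : ℝ) + 1 - q) / 2) (tv n θ h)
          (fun y => tv n θ f y * Wt n p y) := by
  obtain ⟨w, hw0, hw⟩ := W_bounds (E := Hs n) (Real.tan θ) (Wt_contDiff p) (fun y => Real.exp_pos _)
  have hR := tan_pos' hθ
  have hc := cos_pos' hθ
  set R := Real.tan θ with hRd
  set M := (Real.cos θ)⁻¹ * |K₂| with hMd
  set a := (Real.cos θ)⁻¹ * |K₁| + 2 * |K₁| with had
  set β := ((n : ℝ) + 1 - q) / 2 with hβ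
  have hM : 0 ≤ M := by positivity
  have ha : 0 ≤ a := by positivity
  have t1 : 0 ≤ 1 / R ^ 2 := by positivity
  have t2 : (0:ℝ) ≤ n := by positivity
  have t3 := abs_nonneg (p - 1)
  have t4 := abs_nonneg β
  have t5 : 0 ≤ 1 / m₂ := by positivity
  have t6 : 0 ≤ 1 / m₂ ^ 2 := by positivity
  have t7 : 0 ≤ M / R := by positivity
  have t8 : 0 ≤ 1 / m₁ * w := by positivity
  have t9 : 0 ≤ a * w := by positivity
  refine ⟨1 + R + 1 / R ^ 2 + n + |p - 1| + |β| + 1 / m₂ + 1 / m₂ ^ 2 + M / R + 2 * M + 1 / m₁ * w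
    + 4 * (a * w), ?_⟩
  intro f h hf hfp hfm hfK hh hhp hhm hhK hcv hS hRb
  have hK2 : K₂ ≤ |K₂| := le_abs_self _
  have hB : ∀ y : Hs n, ‖y‖ ≤ R → m₂ ≤ tv n θ h y ∧ tv n θ h y ≤ M ∧ m₂ ^ 2 ≤ rhof (tv n θ h) y ∧
    (∀ e, ‖e‖ = 1 → |dd e (tv n θ h) y| ≤ M / R) ∧ |dd y (tv n θ h) y| ≤ M := by
    intro y hy
    obtain ⟨k1, k2, k3, k4, k5⟩ := h_bounds hθ hh hm₂ hhm hhK hcv hRb hy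
    have hle : (Real.cos θ)⁻¹ * K₂ ≤ M := by rw [hMd]; gcongr
    refine ⟨k1, k2.trans hle, k3, fun e he => (k4 e he).trans ?_, k5.trans hle⟩
    gcongr
  have hA : ∀ y : Hs n, ‖y‖ ≤ R → m₁ ≤ tv n θ f y ∧ |tv n θ f y| ≤ a ∧
      ∀ e, ‖e‖ = 1 → |dd e (tv n θ f) y| ≤ a ∧ |dd e (dd e (tv n θ f)) y| ≤ a := by
    intro y hy
    obtain ⟨k0, k1, k2, k3⟩ := f_bounds hθ hf hm₁ hfm hfK hy
    have u1 : 0 ≤ (Real.cos θ)⁻¹ * |K₁| := by positivity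
    have u2 := abs_of_pos k0
    rw [u2] at had u1
    refine ⟨k1, ?_, fun e he => ⟨?_, ?_⟩⟩
    · rw [abs_of_pos (by linarith)]; linarith
    · linarith [(k3 e he).1]
    · linarith [(k3 e he).2]
  have hWp : ∀ y : Hs n, 0 < Wt n p y := fun y => Real.exp_pos _
  constructor
  · linarith
  · exact hR
  · exact tv_contDiff hh
  · exact (tv_contDiff hf).mul (Wt_contDiff p)
  · exact fun y hy e he => conv_tv hθ hh hcv hy he
  · intro y hy
    have := wf_bdry hθ hh hRb hy
    rw [wf] at this; linarith
  · exact fun y hy b => eq_tv hθ hfp hh hhp hS hy b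
  · intro y hy; linarith [(hB y hy).1]
  · intro y hy
    have := one_div_le_one_div_of_le hm₂ (hB y hy).1
    linarith
  · intro y hy; linarith [(hB y hy).2.1]
  · intro y hy
    have : 0 < m₂ ^ 2 := by positivity
    linarith [(hB y hy).2.2.1]
  · intro y hy
    have := one_div_le_one_div_of_le (by positivity) (hB y hy).2.2.1
    linarith
  · intro y hy e he; linarith [(hB y hy).2.2.2.1 e he]
  · intro y hy
    obtain ⟨k1, k2, k3, k4, k5⟩ := hB y hy
    rw [wf, abs_le]; rw [abs_le] at k5
    constructor <;> linarith
  · intro y hy; linarith [(hB y hy).2.2.2.2]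
  · intro y hy; exact mul_pos (by linarith [(hA y hy).1]) (hWp y)
  · intro y hy
    have k1 := one_div_le_one_div_of_le hm₁ (hA y hy).1
    have k2 := (hw y hy).2.1
    have k3 : 1 / (tv n θ f y * Wt n p y) = 1 / tv n θ f y * (1 / Wt n p y) := by
      rw [one_div_mul_one_div]
    have : 1 / (tv n θ f y * Wt n p y) ≤ 1 / m₁ * w := by
      rw [k3]; exact mul_le_mul k1 k2 (by have := hWp y; positivity) (by positivity)
    linarith
  · intro y hy
    have k1 := (hA y hy).2.1
    have : tv n θ f y * Wt n p y ≤ a * w :=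
      mul_le_mul (le_trans (le_abs_self _) k1) (hw y hy).1 (hWp y).le ha
    linarith
  · intro y hy e he
    rw [(mul_jets (tv_contDiff hf) (Wt_contDiff p) y e).1]
    have kW : |Wt n p y| ≤ w := by rw [abs_of_pos (hWp y)]; exact (hw y hy).1
    have k1 := ab_mul ((hA y hy).2.2 e he).1 kW
    have k2 := ab_mul (hA y hy).2.1 ((hw y hy).2.2 e he).1
    have := ab_add k1 k2
    linarith
  · intro y hy e he
    rw [(mul_jets (tv_contDiff hf) (Wt_contDiff p) y e).2]
    have kW : |Wt n p y| ≤ w := by rw [abs_of_pos (hWp y)]; exact (hw y hy).1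
    have k1 := ab_mul ((hA y hy).2.2 e he).2 kW
    have k2 := ab_mul (hA y hy).2.1 ((hw y hy).2.2 e he).2
    have k3 := ab_mul ((hA y hy).2.2 e he).1 ((hw y hy).2.2 e he).1
    have k4 := ab_mul (show |(2:ℝ)| ≤ 2 by norm_num) k3
    have := ab_add (ab_add k1 k4) k2
    linarith
  all_goals linarith

end geo


theorem bil_bound {E : Type*} [NormedAddCommGroup E] [InnerProductSpace ℝ E] {v : E → ℝ}
    (hv : ContDiff ℝ (⊤ : ℕ∞) v) {y : E} {C : ℝ} (h0 : ∀ e, 0 ≤ dd e (dd e v) y)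
    (h1 : ∀ e, ‖e‖ = 1 → dd e (dd e v) y ≤ C) (a e : E) :
    |dd a (dd e v) y| ≤ C * ‖a‖ * ‖e‖ := by
  set B := fderiv ℝ (fderiv ℝ v) y with hB
  have hBe : ∀ a e, dd a (dd e v) y = B a e := fun a e => dd_dd hv a e y
  have hs : ∀ a e, B a e = B e a := by
    intro a e; rw [← hBe, ← hBe, dd_comm hv]
  simp only [hBe] at *
  by_cases ha : a = 0
  · subst ha; simp
  by_cases he : e = 0
  · subst he; simp
  have na : 0 < ‖a‖ := norm_pos_iff.mpr ha
  have ne : 0 < ‖e‖ := norm_pos_iff.mpr he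
  have hd : ∀ a : E, a ≠ 0 → B a a ≤ C * ‖a‖ ^ 2 := by
    intro a ha
    have na : 0 < ‖a‖ := norm_pos_iff.mpr ha
    have k := h1 (‖a‖⁻¹ • a) (by rw [norm_smul, norm_inv, norm_norm, inv_mul_cancel₀ na.ne'])
    simp only [map_smul, smul_apply, smul_eq_mul] at k
    rw [inv_mul_le_iff₀ na, inv_mul_le_iff₀ na] at k
    linarith
  have k1 := hd a ha
  have k2 := hd e he
  have p1 := h0 (‖e‖ • a + ‖a‖ • e)
  have p2 := h0 (‖e‖ • a - ‖a‖ • e)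
  simp only [map_add, map_sub, map_smul, add_apply, sub_apply, smul_apply, smul_eq_mul, hs e a] at p1 p2
  have q1 : ‖e‖ ^ 2 * B a a ≤ ‖e‖ ^ 2 * (C * ‖a‖ ^ 2) := by gcongr
  have q2 : ‖a‖ ^ 2 * B e e ≤ ‖a‖ ^ 2 * (C * ‖e‖ ^ 2) := by gcongr
  have hp : 0 < ‖a‖ * ‖e‖ := by positivity
  rw [abs_le]
  constructor
  · have : (‖a‖ * ‖e‖) * (-(C * ‖a‖ * ‖e‖)) ≤ (‖a‖ * ‖e‖) * B a e := by nlinarith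
    exact le_of_mul_le_mul_left this hp
  · have : (‖a‖ * ‖e‖) * B a e ≤ (‖a‖ * ‖e‖) * (C * ‖a‖ * ‖e‖) := by nlinarith
    exact le_of_mul_le_mul_left this hp

section geo
variable {n : ℕ} {θ : ℝ}

theorem lift_tan (hθ : θ ∈ Set.Ioo 0 (π / 2)) {y : Hs n} (hy : ‖y‖ ≤ Real.tan θ) {X : Euc n}
    (hX : IsTangent n θ (xiy n θ y) X) : ∃ a : Hs n, tproj n θ (xiy n θ y) (a : Euc n) = X ∧
      ‖a‖ ≤ (1 + (Real.cos θ)⁻¹) * ‖X‖ := by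
  have hm : X + ⟪X, eVec n⟫ • YY n y ∈ (Submodule.span ℝ {eVec n})ᗮ := by
    rw [Submodule.mem_orthogonal_singleton_iff_inner_right, real_inner_comm, inner_add_left,
      inner_smul_left, YY_inner_e]; simp
  refine ⟨⟨_, hm⟩, ?_, ?_⟩
  · change tproj n θ (xiy n θ y) (X + ⟪X, eVec n⟫ • YY n y) = X
    have hz : tproj n θ (xiy n θ y) (YY n y) = 0 := by
      rw [YY_eq, map_smul, ← sphNormal_xiy (θ := θ), tproj_nu (xiy_norm y), smul_zero]
    rw [map_add, map_smul, hz, tproj_tan hX]; simp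
  · change ‖X + ⟪X, eVec n⟫ • YY n y‖ ≤ _
    have h1 := abs_real_inner_le_norm X (eVec n)
    rw [eVec_norm, mul_one] at h1
    have h2 := YY_le hθ hy
    calc _ ≤ ‖X‖ + ‖⟪X, eVec n⟫ • YY n y‖ := norm_add_le _ _
      _ = ‖X‖ + |⟪X, eVec n⟫| * ‖YY n y‖ := by rw [norm_smul, Real.norm_eq_abs]
      _ ≤ ‖X‖ + ‖X‖ * (Real.cos θ)⁻¹ := by gcongr
      _ = _ := by ring

theorem shess_final (hθ : θ ∈ Set.Ioo 0 (π / 2)) {h : Euc n → ℝ} (hh : ContDiff ℝ (⊤ : ℕ∞) h)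
    {K₂ D : ℝ} (hK : CZeroNormLe n θ h K₂) (hc : IsConvexSol n θ h)
    (hD : ∀ y : Hs n, ‖y‖ ≤ Real.tan θ → ∀ e, ‖e‖ = 1 → dd e (dd e (tv n θ h)) y ≤ D)
    {ξ : Euc n} (hξ : ξ ∈ cap n θ) {X Y : Euc n} (hX : IsTangent n θ ξ X) (hY : IsTangent n θ ξ Y) :
    |shess n θ h ξ X Y| ≤
      ((Real.cos θ)⁻¹ * (|D| * (1 + (Real.cos θ)⁻¹) * (1 + (Real.cos θ)⁻¹)) + |K₂| + 1) * ‖X‖ * ‖Y‖ := by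
  obtain ⟨y, hy, rfl⟩ := xiy_surj hθ hξ
  obtain ⟨a, ha, han⟩ := lift_tan hθ hy hX
  obtain ⟨b, hb, hbn⟩ := lift_tan hθ hy hY
  have k := dd_dd_tv (θ := θ) hh y a b
  rw [Qop_inner (xiy_norm y), ha, hb] at k
  have s1 := YY_one_le y
  have s2 := YY_le hθ hy
  have c0 := cos_pos' hθ
  set S := (Real.cos θ)⁻¹ with hS
  have hS0 : 0 < S := by positivity
  have kb := bil_bound (tv_contDiff (θ := θ) hh) (y := y) (C := |D|) (fun e => by
    by_cases he : e = 0
    · subst he; simp [dd]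
    · exact (conv_tv hθ hh hc hy he).le) (fun e he => (hD y hy e he).trans (le_abs_self D)) a b
  have hsh : shess n θ h (xiy n θ y) X Y = ‖YY n y‖ * dd a (dd b (tv n θ h)) y
      - h (xiy n θ y) * ⟪X, Y⟫ := by
    rw [k]; field_simp; ring
  have e1 : |‖YY n y‖| ≤ S := by rwa [abs_of_nonneg (norm_nonneg _)]
  have e2 : |D| * ‖a‖ * ‖b‖ ≤ |D| * ((1 + S) * ‖X‖) * ((1 + S) * ‖Y‖) := by gcongr
  have e3 := ab_mul e1 (kb.trans e2)
  have e4 := ab_mul ((hK _ hξ).trans (le_abs_self K₂)) (abs_real_inner_le_norm X Y)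
  rw [hsh]
  refine (ab_sub e3 e4).trans ?_
  have : 0 ≤ ‖X‖ * ‖Y‖ := by positivity
  linarith

theorem C2_main (n : ℕ) (θ p q : ℝ) (hθ : θ ∈ Set.Ioo 0 (π / 2))
    (m₁ m₂ K₁ K₂ : ℝ) (hm₁ : 0 < m₁) (hm₂ : 0 < m₂) :
    ∃ C : ℝ, 0 < C ∧
      ∀ f h : Euc n → ℝ,
        ContDiff ℝ (⊤ : ℕ∞) f → (∀ ξ ∈ cap n θ, 0 < f ξ) →
        (∀ ξ ∈ cap n θ, m₁ ≤ f ξ) → CTwoNormLe n θ f K₁ →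
        ContDiff ℝ (⊤ : ℕ∞) h → PosOnCap n θ h →
        (∀ ξ ∈ cap n θ, m₂ ≤ h ξ) → CZeroNormLe n θ h K₂ →
        IsConvexSol n θ h → SolvesEq n θ p q f h → RobinBC n θ h →
        ∀ ξ ∈ cap n θ, ∀ X Y : Euc n, IsTangent n θ ξ X → IsTangent n θ ξ Y →
          |shess n θ h ξ X Y| ≤ C * ‖X‖ * ‖Y‖ := by
  obtain ⟨N, hN⟩ := flat_exists (n := n) hθ p q (K₁ := K₁) (K₂ := K₂) hm₁ hm₂
  have hc := cos_pos' hθ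
  refine ⟨(Real.cos θ)⁻¹ * (|Cflat N| * (1 + (Real.cos θ)⁻¹) * (1 + (Real.cos θ)⁻¹)) + |K₂| + 1,
    by positivity, ?_⟩
  intro f h hf hfp hfm hfK hh hhp hhm hhK hcv hS hRb ξ hξ X Y hX hY
  have H := hN f h hf hfp hfm hfK hh hhp hhm hhK hcv hS hRb
  exact shess_final hθ hh hhK hcv (fun y hy e he => H.main Hs_finrank hy he) hξ hX hY
end geo

/-- Lemma 4.1, `C²` estimate: for `p > q` and `θ ∈ (0, π/2)` there is a
constant `C` depending only on `n`, `p`, `q`, a positive lower bound `m₁` for `f`, a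
positive lower bound `m₂` for `h`, a `C²` bound `K₁` for `f` and a `C⁰` bound `K₂` for `h`,
such that any positive convex solution satisfies `max_{C_θ} |∇²h| ≤ C`. -/
theorem C2_estimate
    (n : ℕ) (hn : 1 ≤ n) (θ p q : ℝ) (hθ : θ ∈ Set.Ioo 0 (π / 2)) (hpq : q < p)
    (m₁ m₂ K₁ K₂ : ℝ) (hm₁ : 0 < m₁) (hm₂ : 0 < m₂) :
    ∃ C : ℝ, 0 < C ∧
      ∀ f h : Euc n → ℝ,
        ContDiff ℝ (⊤ : ℕ∞) f → (∀ ξ ∈ cap n θ, 0 < f ξ) →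
        (∀ ξ ∈ cap n θ, m₁ ≤ f ξ) → CTwoNormLe n θ f K₁ →
        ContDiff ℝ (⊤ : ℕ∞) h → PosOnCap n θ h →
        (∀ ξ ∈ cap n θ, m₂ ≤ h ξ) → CZeroNormLe n θ h K₂ →
        IsConvexSol n θ h → SolvesEq n θ p q f h → RobinBC n θ h →
        ∀ ξ ∈ cap n θ, ∀ X Y : Euc n, IsTangent n θ ξ X → IsTangent n θ ξ Y →
          |shess n θ h ξ X Y| ≤ C * ‖X‖ * ‖Y‖ := by
  exact C2_main n θ p q hθ m₁ m₂ K₁ K₂ hm₁ hm₂
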